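/- arXiv:2501.07807 — 17 statements merged into one kernel-verified Lean document; each statement's English description precedes it below -/
import Mathlib

section
/- Let W be a real inner product space, let M : W → W be a continuous linear map that is self-adjoint (⟨M u, v⟩ = ⟨u, M v⟩ for all u, v) and positive semidefinite (⟨u, M u⟩ ≥ 0 for all u), and let T : W → Set W be monotone, i.e. ⟨w − w', v − v'⟩ ≥ 0 whenever v ∈ T w and v' ∈ T w'. If w, w̄, w', w̄' ∈ W satisfy M w − M w̄ ∈ T w̄ and M w' − M w̄' ∈ T w̄', then ⟨w̄ − w̄', M(w̄ − w̄')⟩ + ⟨(w − w̄) − (w' − w̄'), M((w − w̄) − (w' − w̄'))⟩ ≤ ⟨w − w', M(w − w')⟩. (M-firm non-expansiveness of the resolvent step (M+T)^{-1}M.) -/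
open RealInnerProductSpace

/-- M-firm non-expansiveness of the resolvent step (M+T)⁻¹M. -/
theorem stmt_0 {W : Type*} [NormedAddCommGroup W] [InnerProductSpace ℝ W]
    (M : W →L[ℝ] W)
    (hMsa : ∀ u v : W, ⟪M u, v⟫ = ⟪u, M v⟫)
    (hMpsd : ∀ u : W, 0 ≤ ⟪u, M u⟫)
    (T : W → Set W)
    (hT : ∀ w w' v v' : W, v ∈ T w → v' ∈ T w' → 0 ≤ ⟪w - w', v - v'⟫)
    (w wb w' wb' : W)
    (h1 : M w - M wb ∈ T wb) (h2 : M w' - M wb' ∈ T wb') :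
    ⟪wb - wb', M (wb - wb')⟫
      + ⟪(w - wb) - (w' - wb'), M ((w - wb) - (w' - wb'))⟫
      ≤ ⟪w - w', M (w - w')⟫ := by
  -- With `a = wb - wb'` and `b = (w - wb) - (w' - wb')`, one has `w - w' = a + b`; expanding the
  -- quadratic form of `M` leaves the cross term `2 ⟪a, M b⟫`, nonnegative by monotonicity of `T`.
  have hab : w - w' = (wb - wb') + ((w - wb) - (w' - wb')) := by abel
  have hmono : 0 ≤ ⟪wb - wb', M ((w - wb) - (w' - wb'))⟫ := by
    simpa only [map_sub] using hT wb wb' _ _ h1 h2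
  rw [hab]
  generalize wb - wb' = a at *
  generalize (w - wb) - (w' - wb') = b at *
  have hsymm : ⟪b, M a⟫ = ⟪a, M b⟫ := by rw [← hMsa, real_inner_comm]
  rw [map_add, inner_add_left, inner_add_right, inner_add_right, hsymm]
  linarith
end

section
/- Let W be a real inner product space, M : W → W a continuous linear self-adjoint positive semidefinite map, and ρ ∈ (0, 2]. Suppose w, w̄, w* ∈ W satisfy the M-firm inequality ⟨w̄ − w*, M(w̄ − w*)⟩ + ⟨w − w̄, M(w − w̄)⟩ ≤ ⟨w − w*, M(w − w*)⟩. Then the relaxed point w⁺ := (1 − ρ) w + ρ w̄ satisfies ⟨w⁺ − w*, M(w⁺ − w*)⟩ ≤ ⟨w − w*, M(w − w*)⟩ − ρ(2 − ρ) ⟨w − w̄, M(w − w̄)⟩. (Key one-step inequality of the degenerate proximal point algorithm.) -/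
open RealInnerProductSpace

/-!
Write `a = w - wstar` and `d = w - wb`, and let `q u = ⟪u, M u⟫`. Both points in play lie on the
line `a - t • d`: the resolvent point `wb - wstar` at `t = 1`, the relaxed point at `t = ρ`.
Along this line `q (a - t • d) = q a - 2 t ⟪a, M d⟫ + t ^ 2 q d` by self-adjointness. At `t = 1`
the firm inequality therefore says `q d ≤ ⟪a, M d⟫`; inserting this in the expansion at `t = ρ`,
where `ρ > 0`, gives the claim.
-/

theorem quadForm_sub_smul {W : Type*} [NormedAddCommGroup W] [InnerProductSpace ℝ W]
    (M : W →L[ℝ] W) (hMsa : ∀ u v : W, ⟪M u, v⟫ = ⟪u, M v⟫) (a d : W) (t : ℝ) :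
    ⟪a - t • d, M (a - t • d)⟫ = ⟪a, M a⟫ - 2 * t * ⟪a, M d⟫ + t ^ 2 * ⟪d, M d⟫ := by
  have hda : ⟪d, M a⟫ = ⟪a, M d⟫ := by rw [← hMsa, real_inner_comm]
  simp only [map_sub, map_smul, inner_sub_left, inner_sub_right, real_inner_smul_left,
    real_inner_smul_right, hda]
  ring

/-- Key one-step inequality of the degenerate proximal point algorithm. -/
theorem stmt_1 {W : Type*} [NormedAddCommGroup W] [InnerProductSpace ℝ W]
    (M : W →L[ℝ] W)
    (hMsa : ∀ u v : W, ⟪M u, v⟫ = ⟪u, M v⟫)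
    (hMpsd : ∀ u : W, 0 ≤ ⟪u, M u⟫)
    (ρ : ℝ) (hρ0 : 0 < ρ) (hρ2 : ρ ≤ 2)
    (w wb wstar : W)
    (hfirm : ⟪wb - wstar, M (wb - wstar)⟫ + ⟪w - wb, M (w - wb)⟫
      ≤ ⟪w - wstar, M (w - wstar)⟫) :
    ⟪((1 - ρ) • w + ρ • wb) - wstar, M (((1 - ρ) • w + ρ • wb) - wstar)⟫
      ≤ ⟪w - wstar, M (w - wstar)⟫ - ρ * (2 - ρ) * ⟪w - wb, M (w - wb)⟫ := by
  have hwb : wb - wstar = (w - wstar) - (1 : ℝ) • (w - wb) := by module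
  have hrel : ((1 - ρ) • w + ρ • wb) - wstar = (w - wstar) - ρ • (w - wb) := by module
  rw [hwb, quadForm_sub_smul M hMsa] at hfirm
  rw [hrel, quadForm_sub_smul M hMsa]
  have hcross : ⟪w - wb, M (w - wb)⟫ ≤ ⟪w - wstar, M (w - wb)⟫ := by linarith
  nlinarith [mul_le_mul_of_nonneg_left hcross hρ0.le]
end

section
/- Let W be a finite-dimensional real inner product space, M : W → W a continuous linear self-adjoint positive semidefinite map with seminorm ‖u‖_M := sqrt⟨u, M u⟩, T : W → Set W monotone, w* ∈ W with 0 ∈ T w*, and ρ ∈ (0, 2]. Let w, w̄ : ℕ → W satisfy, for every k, M(w^k) − M(w̄^k) ∈ T(w̄^k) and w^{k+1} = (1 − ρ) w^k + ρ w̄^k. Then for every k ≥ 0 the ergodic averages w_a^k := (1/(k+1)) Σ_{t=0}^k w^t and w̄_a^k := (1/(k+1)) Σ_{t=0}^k w̄^t satisfy ‖w̄_a^k − w_a^k‖_M ≤ (2/(ρ(k+1))) ‖w^0 − w*‖_M. -/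
/-! Telescoping the relaxation step gives `ρ (k + 1) (w̄ₐ - wₐ) = w (k + 1) - w 0`. With
`a = w 0 - w*` and `b = w (k + 1) - w*`, the inequality `‖b - a‖²_M ≤ 2 ‖a‖²_M + 2 ‖b‖²_M`
holds because `‖a + b‖²_M ≥ 0`, and `‖b‖_M ≤ ‖a‖_M` by Fejér monotonicity (`fejer_step`).
Hence `‖b - a‖_M ≤ 2 ‖a‖_M`, without the triangle inequality for the seminorm. -/

open RealInnerProductSpace

/-- One relaxed step is Fejér monotone for `‖·‖_M`. Here `x` and `y` stand for `w k - w*` and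
`w̄ k - w*`, and `h` is the monotonicity of `T` between `w̄ k` and `w*`. The squared
seminorm drops by at least `ρ (2 - ρ) ‖y - x‖²_M`, which is nonnegative since `0 < ρ ≤ 2`. -/
theorem fejer_step {W : Type*} [NormedAddCommGroup W] [InnerProductSpace ℝ W]
    (M : W →L[ℝ] W) (hMsa : ∀ u v : W, ⟪M u, v⟫ = ⟪u, M v⟫)
    (hMpsd : ∀ u : W, 0 ≤ ⟪u, M u⟫) {ρ : ℝ} (hρ0 : 0 < ρ) (hρ2 : ρ ≤ 2)
    (x y : W) (h : 0 ≤ ⟪y, M x - M y⟫) :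
    ⟪(1 - ρ) • x + ρ • y, M ((1 - ρ) • x + ρ • y)⟫ ≤ ⟪x, M x⟫ := by
  have hd := hMpsd (y - x)
  have hxy : ⟪x, M y⟫ = ⟪y, M x⟫ := by rw [← hMsa, real_inner_comm]
  simp only [map_add, map_sub, map_smul, inner_add_left, inner_add_right, inner_sub_left,
    inner_sub_right, real_inner_smul_left, real_inner_smul_right, hxy] at *
  nlinarith [mul_nonneg (mul_nonneg hρ0.le (sub_nonneg.2 hρ2)) hd, mul_nonneg hρ0.le h]

/-- Ergodic estimate (a) of Proposition 2.1: ‖w̄ₐᵏ − wₐᵏ‖_M ≤ (2/(ρ(k+1))) ‖w⁰ − w*‖_M. -/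
theorem stmt_2 {W : Type*} [NormedAddCommGroup W] [InnerProductSpace ℝ W]
    [FiniteDimensional ℝ W]
    (M : W →L[ℝ] W)
    (hMsa : ∀ u v : W, ⟪M u, v⟫ = ⟪u, M v⟫)
    (hMpsd : ∀ u : W, 0 ≤ ⟪u, M u⟫)
    (T : W → Set W)
    (hT : ∀ w w' v v' : W, v ∈ T w → v' ∈ T w' → 0 ≤ ⟪w - w', v - v'⟫)
    (wstar : W) (hstar : (0 : W) ∈ T wstar)
    (ρ : ℝ) (hρ0 : 0 < ρ) (hρ2 : ρ ≤ 2)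
    (w wb : ℕ → W)
    (hres : ∀ k : ℕ, M (w k) - M (wb k) ∈ T (wb k))
    (hupd : ∀ k : ℕ, w (k + 1) = (1 - ρ) • w k + ρ • wb k) :
    ∀ k : ℕ, ∀ wa wba : W,
      wa = (1 / ((k : ℝ) + 1)) • ∑ t ∈ Finset.range (k + 1), w t →
      wba = (1 / ((k : ℝ) + 1)) • ∑ t ∈ Finset.range (k + 1), wb t →
      Real.sqrt ⟪wba - wa, M (wba - wa)⟫
        ≤ (2 / (ρ * ((k : ℝ) + 1))) * Real.sqrt ⟪w 0 - wstar, M (w 0 - wstar)⟫ := by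
  intro k wa wba hwa hwba
  have hfejer : ∀ n, ⟪w n - wstar, M (w n - wstar)⟫ ≤ ⟪w 0 - wstar, M (w 0 - wstar)⟫ := by
    intro n
    induction n with
    | zero => exact le_rfl
    | succ n ih =>
      have hmono := hT _ _ _ _ (hres n) hstar
      have e : w (n + 1) - wstar = (1 - ρ) • (w n - wstar) + ρ • (wb n - wstar) := by
        rw [hupd]; module
      rw [e]
      refine (fejer_step M hMsa hMpsd hρ0 hρ2 _ _ ?_).trans ih
      simpa only [map_sub, sub_zero, sub_sub_sub_cancel_right] using hmono
  have htel : ∀ n, ∑ t ∈ Finset.range n, wb t - ∑ t ∈ Finset.range n, w t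
      = ρ⁻¹ • (w n - w 0) := by
    intro n
    rw [← Finset.sum_sub_distrib, ← Finset.sum_range_sub w n, Finset.smul_sum]
    refine Finset.sum_congr rfl fun t _ => ?_
    have e : w (t + 1) - w t = ρ • (wb t - w t) := by rw [hupd]; module
    rw [e, inv_smul_smul₀ hρ0.ne']
  have hk : (0 : ℝ) < (k : ℝ) + 1 := by positivity
  have hdiff : wba - wa = (1 / (ρ * ((k : ℝ) + 1))) •
      ((w (k + 1) - wstar) - (w 0 - wstar)) := by
    rw [hwa, hwba, ← smul_sub, htel, smul_smul, sub_sub_sub_cancel_right]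
    congr 1
    field_simp
  have hb := hfejer (k + 1)
  generalize w (k + 1) - wstar = b at hdiff hb
  generalize w 0 - wstar = a at hdiff hb ⊢
  have hab : ⟪b - a, M (b - a)⟫ ≤ 4 * ⟪a, M a⟫ := by
    have hp := hMpsd (b + a)
    simp only [map_add, map_sub, inner_add_left, inner_add_right, inner_sub_left,
      inner_sub_right] at *
    linarith
  rw [Real.sqrt_le_iff]
  refine ⟨by positivity, ?_⟩
  rw [hdiff, map_smul, real_inner_smul_left, real_inner_smul_right, mul_pow,
    Real.sq_sqrt (hMpsd a)]
  calc _ = (1 / (ρ * ((k : ℝ) + 1))) ^ 2 * ⟪b - a, M (b - a)⟫ := by ring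
    _ ≤ (1 / (ρ * ((k : ℝ) + 1))) ^ 2 * (4 * ⟪a, M a⟫) := by gcongr
    _ = _ := by ring
end

section
/- Let W be a real inner product space, M : W → W a continuous linear self-adjoint positive semidefinite map, and T : W → Set W monotone. Let w, w̄ : ℕ → W satisfy M(w^t) − M(w̄^t) ∈ T(w̄^t) for every t. Fix k ≥ 0, set w_a^k := (1/(k+1)) Σ_{t=0}^k w^t, w̄_a^k := (1/(k+1)) Σ_{t=0}^k w̄^t, and ε̄_a^k := (1/(k+1)) Σ_{t=0}^k ⟨w̄^t − w̄_a^k, M(w^t − w̄^t)⟩. Then for every w' ∈ W and every v' ∈ T w', one has ⟨w̄_a^k − w', M(w_a^k − w̄_a^k) − v'⟩ ≥ −ε̄_a^k; that is, M(w_a^k − w̄_a^k) belongs to the ε̄_a^k-enlargement T^{ε̄_a^k}(w̄_a^k). -/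
open RealInnerProductSpace

/-!
Averaging the monotonicity inequalities `0 ≤ ⟪wb t - w', M (w t - wb t) - v'⟫` over `t ≤ k`
gives the claim: splitting `wb t - w' = (wb t - wba) + (wba - w')` in the pairing with
`M (w t - wb t)`, the first part averages to `εa`, and the rest averages to
`⟪wba - w', M (wa - wba) - v'⟫` by linearity. This is an instance of the transportation formula
for enlargements of monotone operators.
-/

/-- M(wₐᵏ − w̄ₐᵏ) belongs to the ε̄ₐᵏ-enlargement of T at w̄ₐᵏ. -/
theorem stmt_3 {W : Type*} [NormedAddCommGroup W] [InnerProductSpace ℝ W]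
    (M : W →L[ℝ] W)
    (hMsa : ∀ u v : W, ⟪M u, v⟫ = ⟪u, M v⟫)
    (hMpsd : ∀ u : W, 0 ≤ ⟪u, M u⟫)
    (T : W → Set W)
    (hT : ∀ w w' v v' : W, v ∈ T w → v' ∈ T w' → 0 ≤ ⟪w - w', v - v'⟫)
    (w wb : ℕ → W)
    (hres : ∀ t : ℕ, M (w t) - M (wb t) ∈ T (wb t))
    (k : ℕ) (wa wba : W) (εa : ℝ)
    (hwa : wa = (1 / ((k : ℝ) + 1)) • ∑ t ∈ Finset.range (k + 1), w t)
    (hwba : wba = (1 / ((k : ℝ) + 1)) • ∑ t ∈ Finset.range (k + 1), wb t)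
    (hεa : εa = (1 / ((k : ℝ) + 1)) *
      ∑ t ∈ Finset.range (k + 1), ⟪wb t - wba, M (w t - wb t)⟫) :
    ∀ w' v' : W, v' ∈ T w' → ⟪wba - w', M (wa - wba) - v'⟫ ≥ -εa := by
  intro w' v' hv'
  have hn : (0 : ℝ) < (k : ℝ) + 1 := by positivity
  have hw : ∑ t ∈ Finset.range (k + 1), w t = ((k : ℝ) + 1) • wa := by
    rw [hwa, smul_smul, mul_one_div_cancel hn.ne', one_smul]
  have hwb : ∑ t ∈ Finset.range (k + 1), wb t = ((k : ℝ) + 1) • wba := by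
    rw [hwba, smul_smul, mul_one_div_cancel hn.ne', one_smul]
  have hε : ∑ t ∈ Finset.range (k + 1), ⟪wb t - wba, M (w t - wb t)⟫ = ((k : ℝ) + 1) * εa := by
    rw [hεa, ← mul_assoc, mul_one_div_cancel hn.ne', one_mul]
  have hg : ∑ t ∈ Finset.range (k + 1), ⟪wba - w', M (w t - wb t)⟫
      = ((k : ℝ) + 1) * ⟪wba - w', M (wa - wba)⟫ := by
    rw [← inner_sum, ← map_sum, Finset.sum_sub_distrib, hw, hwb, ← smul_sub, map_smul,
      real_inner_smul_right]
  have hv : ∑ t ∈ Finset.range (k + 1), ⟪wb t - w', v'⟫ = ((k : ℝ) + 1) * ⟪wba - w', v'⟫ := by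
    simp only [inner_sub_left, Finset.sum_sub_distrib]
    rw [← sum_inner, hwb, real_inner_smul_left]
    simp
    ring
  have hsum : 0 ≤ ∑ t ∈ Finset.range (k + 1), (⟪wb t - wba, M (w t - wb t)⟫
      + ⟪wba - w', M (w t - wb t)⟫ - ⟪wb t - w', v'⟫) := by
    refine Finset.sum_nonneg fun t _ => ?_
    have h := hT _ _ _ _ (hres t) hv'
    rwa [← map_sub, inner_sub_right, ← sub_add_sub_cancel (wb t) wba w', inner_add_left,
      sub_add_sub_cancel] at h
  rw [Finset.sum_sub_distrib, Finset.sum_add_distrib, hε, hg, hv, ← mul_add, ← mul_sub] at hsum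
  have h := nonneg_of_mul_nonneg_right hsum hn
  rw [inner_sub_right]
  linarith
end

section
/- Let W be a real inner product space, M : W → W a continuous linear self-adjoint positive semidefinite map, and T : W → Set W maximal monotone, i.e. T is monotone and moreover any pair (ŵ, v̂) with ⟨ŵ − w', v̂ − v'⟩ ≥ 0 for all w' and all v' ∈ T w' satisfies v̂ ∈ T ŵ. Let w, w̄ : ℕ → W satisfy M(w^t) − M(w̄^t) ∈ T(w̄^t) for every t. Then for every k ≥ 0, the quantity ε̄_a^k := (1/(k+1)) Σ_{t=0}^k ⟨w̄^t − w̄_a^k, M(w^t − w̄^t)⟩, where w̄_a^k := (1/(k+1)) Σ_{t=0}^k w̄^t, is nonnegative: ε̄_a^k ≥ 0. -/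
open RealInnerProductSpace

/-!
Write `x t = wb t` and `v t = M (w t - wb t)`, so that `v t ∈ T (x t)`. Summing the monotonicity
inequality `0 ≤ ⟪x t - x s, v t - v s⟫` over all pairs `(t, s)` of `n = k + 1` indices, and using
the symmetry `t ↔ s`, gives `0 ≤ 2 ∑ t, ∑ s, ⟪x t - x s, v t⟫`. Since `∑ s, (x t - x s)` is
`n • (x t - x̄)` for the mean `x̄`, the right side is `2 n ∑ t, ⟪x t - x̄, v t⟫`.
-/

/-- Nonnegativity of ε̄ₐᵏ under maximal monotonicity of T. -/
theorem stmt_4 {W : Type*} [NormedAddCommGroup W] [InnerProductSpace ℝ W]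
    (M : W →L[ℝ] W)
    (hMsa : ∀ u v : W, ⟪M u, v⟫ = ⟪u, M v⟫)
    (hMpsd : ∀ u : W, 0 ≤ ⟪u, M u⟫)
    (T : W → Set W)
    (hT : ∀ w w' v v' : W, v ∈ T w → v' ∈ T w' → 0 ≤ ⟪w - w', v - v'⟫)
    (hTmax : ∀ wh vh : W, (∀ w' v' : W, v' ∈ T w' → 0 ≤ ⟪wh - w', vh - v'⟫) → vh ∈ T wh)
    (w wb : ℕ → W)
    (hres : ∀ t : ℕ, M (w t) - M (wb t) ∈ T (wb t)) :
    ∀ k : ℕ, ∀ wba : W,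
      wba = (1 / ((k : ℝ) + 1)) • ∑ t ∈ Finset.range (k + 1), wb t →
      0 ≤ (1 / ((k : ℝ) + 1)) *
        ∑ t ∈ Finset.range (k + 1), ⟪wb t - wba, M (w t - wb t)⟫ := by
  intro k wba hwba
  have hn : (0 : ℝ) < (k : ℝ) + 1 := by positivity
  have hv : ∀ t, M (w t - wb t) ∈ T (wb t) := fun t => by
    rw [map_sub]
    exact hres t
  generalize hvd : (fun t => M (w t - wb t)) = v
  have hv' : ∀ t, M (w t - wb t) = v t := fun t => congrFun hvd t
  simp only [hv'] at hv ⊢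
  have hmean : ((k : ℝ) + 1) • wba = ∑ t ∈ Finset.range (k + 1), wb t := by
    rw [hwba, smul_smul, mul_one_div_cancel hn.ne', one_smul]
  have hinner : ∀ t, ∑ s ∈ Finset.range (k + 1), ⟪wb t - wb s, v t⟫
      = ((k : ℝ) + 1) * ⟪wb t - wba, v t⟫ := fun t => by
    rw [← sum_inner, Finset.sum_sub_distrib, ← hmean, Finset.sum_const, Finset.card_range,
      ← Nat.cast_smul_eq_nsmul ℝ, Nat.cast_add_one, ← smul_sub, real_inner_smul_left]
  have hpairs : 0 ≤ ∑ t ∈ Finset.range (k + 1), ∑ s ∈ Finset.range (k + 1),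
      ⟪wb t - wb s, v t - v s⟫ :=
    Finset.sum_nonneg fun t _ => Finset.sum_nonneg fun s _ => hT _ _ _ _ (hv t) (hv s)
  have hsplit : ∀ t s, ⟪wb t - wb s, v t - v s⟫
      = ⟪wb t - wb s, v t⟫ + ⟪wb s - wb t, v s⟫ := fun t s => by
    rw [inner_sub_right, ← neg_sub (wb t) (wb s), inner_neg_left, sub_eq_add_neg]
  have hswap : ∑ t ∈ Finset.range (k + 1), ∑ s ∈ Finset.range (k + 1), ⟪wb s - wb t, v s⟫
      = ∑ t ∈ Finset.range (k + 1), ∑ s ∈ Finset.range (k + 1), ⟪wb t - wb s, v t⟫ :=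
    Finset.sum_comm
  simp only [hsplit, Finset.sum_add_distrib] at hpairs
  rw [hswap] at hpairs
  simp only [hinner, ← Finset.mul_sum] at hpairs
  have hsum : 0 ≤ ∑ t ∈ Finset.range (k + 1), ⟪wb t - wba, v t⟫ :=
    nonneg_of_mul_nonneg_right (by linarith) hn
  positivity
end

section
/- Let W be a real inner product space, M : W → W a continuous linear self-adjoint positive semidefinite map with seminorm ‖u‖_M := sqrt⟨u, M u⟩ and operator norm ‖M‖, and T : W → Set W a set-valued operator. Suppose (M + T)^{-1} is L-Lipschitz in the sense that whenever v₁ − M u₁ ∈ T u₁ and v₂ − M u₂ ∈ T u₂ one has ‖u₁ − u₂‖ ≤ L ‖v₁ − v₂‖. If w, w̄, w* ∈ W satisfy M w − M w̄ ∈ T w̄ and 0 ∈ T w*, then ‖w̄ − w*‖ ≤ L · sqrt(‖M‖) · ‖w − w*‖_M. -/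
/-!
The resolvent value `wb` corresponds to the input `M w`, and `wstar` to the input `M wstar`
(as `0 ∈ T wstar`), so the Lipschitz hypothesis gives `‖wb - wstar‖ ≤ L * ‖M (w - wstar)‖`.
It remains to bound `‖M u‖` by `√‖M‖ * ‖u‖_M`, which follows from positivity of the quadratic
form of `M` at the vector `‖M‖ • u - M u` (`norm_map_sq_le`).
-/

open RealInnerProductSpace

/-- The squared form of `‖M u‖ ≤ √‖M‖ * ‖u‖_M`. No completeness is assumed, so no square root of
`M` is available. -/
theorem norm_map_sq_le {W : Type*} [NormedAddCommGroup W] [InnerProductSpace ℝ W]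
    (M : W →L[ℝ] W)
    (hMsa : ∀ u v : W, ⟪M u, v⟫ = ⟪u, M v⟫)
    (hMpsd : ∀ u : W, 0 ≤ ⟪u, M u⟫) (u : W) :
    ‖M u‖ ^ 2 ≤ ‖M‖ * ⟪u, M u⟫ := by
  have hM : ‖M u‖ ≤ ‖M‖ * ‖u‖ := M.le_opNorm u
  rcases (norm_nonneg M).eq_or_lt with h0 | hpos
  · rw [← h0, zero_mul] at hM
    have : ‖M u‖ = 0 := le_antisymm hM (norm_nonneg _)
    simp [this, ← h0]
  · have hc : ⟪M u, M (M u)⟫ ≤ ‖M‖ * ‖M u‖ ^ 2 :=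
      calc ⟪M u, M (M u)⟫ ≤ ‖M u‖ * ‖M (M u)‖ := real_inner_le_norm _ _
        _ ≤ ‖M u‖ * (‖M‖ * ‖M u‖) := by gcongr; exact M.le_opNorm _
        _ = ‖M‖ * ‖M u‖ ^ 2 := by ring
    have hq := hMpsd (‖M‖ • u - M u)
    have hs : ⟪u, M (M u)⟫ = ‖M u‖ ^ 2 := by
      rw [← hMsa, real_inner_self_eq_norm_sq]
    simp only [map_sub, map_smul, inner_sub_left, inner_sub_right, real_inner_smul_left,
      real_inner_smul_right, hs, real_inner_self_eq_norm_sq] at hq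
    refine le_of_mul_le_mul_left ?_ hpos
    linarith

/-- Lipschitz resolvent bound: ‖w̄ − w*‖ ≤ L √‖M‖ ‖w − w*‖_M. -/
theorem stmt_6 {W : Type*} [NormedAddCommGroup W] [InnerProductSpace ℝ W]
    (M : W →L[ℝ] W)
    (hMsa : ∀ u v : W, ⟪M u, v⟫ = ⟪u, M v⟫)
    (hMpsd : ∀ u : W, 0 ≤ ⟪u, M u⟫)
    (T : W → Set W)
    (L : ℝ) (hL : 0 ≤ L)
    (hLip : ∀ v₁ v₂ u₁ u₂ : W, v₁ - M u₁ ∈ T u₁ → v₂ - M u₂ ∈ T u₂ →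
      ‖u₁ - u₂‖ ≤ L * ‖v₁ - v₂‖)
    (w wb wstar : W)
    (h1 : M w - M wb ∈ T wb) (h2 : (0 : W) ∈ T wstar) :
    ‖wb - wstar‖ ≤ L * Real.sqrt ‖M‖ * Real.sqrt ⟪w - wstar, M (w - wstar)⟫ := by
  have hLw : ‖wb - wstar‖ ≤ L * ‖M w - M wstar‖ :=
    hLip (M w) (M wstar) wb wstar h1 (by simpa using h2)
  have hM : ‖M (w - wstar)‖ ≤ √‖M‖ * √⟪w - wstar, M (w - wstar)⟫ := by
    rw [← Real.sqrt_mul (norm_nonneg M)]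
    exact Real.le_sqrt_of_sq_le (norm_map_sq_le M hMsa hMpsd _)
  calc ‖wb - wstar‖ ≤ L * ‖M (w - wstar)‖ := by rwa [map_sub]
    _ ≤ L * (√‖M‖ * √⟪w - wstar, M (w - wstar)⟫) := by gcongr
    _ = L * √‖M‖ * √⟪w - wstar, M (w - wstar)⟫ := by ring
end

section
/- Let W be a finite-dimensional real inner product space, M : W → W a continuous linear self-adjoint positive semidefinite map, and T : W → Set W maximal monotone with 0 ∈ T w* for some w* ∈ W. Suppose (M + T)^{-1} has full domain (for every v ∈ W there exists u with v − M u ∈ T u) and is L-Lipschitz (whenever v₁ − M u₁ ∈ T u₁ and v₂ − M u₂ ∈ T u₂, ‖u₁ − u₂‖ ≤ L ‖v₁ − v₂‖). Let ρ ∈ (0, 2] and let w, w̄ : ℕ → W satisfy, for every k, M(w^k) − M(w̄^k) ∈ T(w̄^k) and w^{k+1} = (1 − ρ) w^k + ρ w̄^k. Then the ergodic sequence w̄_a^k := (1/(k+1)) Σ_{t=0}^k w̄^t converges, as k → ∞, to a point ŵ ∈ W with 0 ∈ T ŵ. -/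
/-!
Write `q x = ⟪x, M x⟫` for the squared `M`-seminorm. The result rests on one inequality
(`dppa_descent`): for every `v ∈ T u`,
`2ρ ⟪w̄ᵏ - u, v⟫ ≤ q (wᵏ - u) - q (wᵏ⁺¹ - u)`, which uses monotonicity of `T` and `ρ ≤ 2`.

* Telescoping it bounds `⟪w̄ₐᵏ - u, v⟫` by `O(1/k)`, so by maximality every cluster point of the
  ergodic sequence `w̄ₐ` is a zero of `T`.
* Taking `v = 0` shows that `q (wᵏ - z)` is antitone in `k` for every zero `z`. Hence `M wᵏ` is
  bounded (`norm_sq_map_le`), and so are `w̄ᵏ` (by the Lipschitz property) and `w̄ₐ`.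
* For two cluster points `z₁, z₂`, the difference `q (wᵏ - z₁) - q (wᵏ - z₂)` converges, so
  `⟪wᵏ, M (z₁ - z₂)⟫` converges, and therefore so do `⟪w̄ᵏ, M (z₁ - z₂)⟫` and its Cesàro means
  `⟪w̄ₐᵏ, M (z₁ - z₂)⟫`. Evaluating the limit along the two subsequences gives `q (z₁ - z₂) = 0`,
  so `M z₁ = M z₂`, and the Lipschitz property of `(M + T)⁻¹` gives `z₁ = z₂`.

A bounded sequence in a finite-dimensional space with a single cluster point converges.
-/

open RealInnerProductSpace

open Filter Topology

/-- The `M`-seminorm dominates the norm of `M x`; this replaces coercivity of `M`. -/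
lemma norm_sq_map_le {W : Type*} [NormedAddCommGroup W] [InnerProductSpace ℝ W]
    (M : W →L[ℝ] W) (hMsa : ∀ u v : W, ⟪M u, v⟫ = ⟪u, M v⟫)
    (hMpsd : ∀ u : W, 0 ≤ ⟪u, M u⟫) (x : W) :
    ‖M x‖ ^ 2 ≤ (‖M‖ + 1) * ⟪x, M x⟫ := by
  have hc : 0 < ‖M‖ + 1 := by positivity
  -- positivity is tested at the gradient step `c x - M x` with `c = ‖M‖ + 1`
  have h := hMpsd ((‖M‖ + 1) • x - M x)
  have h1 : ⟪M x, M (M x)⟫ ≤ ‖M‖ * ‖M x‖ ^ 2 := by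
    calc ⟪M x, M (M x)⟫ ≤ ‖M x‖ * ‖M (M x)‖ := real_inner_le_norm _ _
      _ ≤ ‖M x‖ * (‖M‖ * ‖M x‖) := by gcongr; exact M.le_opNorm _
      _ = _ := by ring
  have h2 : ⟪x, M (M x)⟫ = ‖M x‖ ^ 2 := by
    rw [← hMsa, real_inner_self_eq_norm_sq]
  simp only [map_sub, map_smul, inner_sub_left, inner_sub_right, inner_smul_left,
    inner_smul_right, h2, real_inner_self_eq_norm_sq, conj_trivial] at h
  have h3 : 0 ≤ (‖M‖ + 1) * ((‖M‖ + 1) * ⟪x, M x⟫ - ‖M x‖ ^ 2) := by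
    nlinarith [sq_nonneg ‖M x‖]
  have := nonneg_of_mul_nonneg_right h3 hc
  linarith

/-- One step of the relaxed iteration decreases the squared `M`-distance to any `u` by at least
`2ρ ⟪b - u, v⟫`, for every `v ∈ T u`; the hypothesis `h` is what monotonicity provides. -/
lemma dppa_descent {W : Type*} [NormedAddCommGroup W] [InnerProductSpace ℝ W]
    (M : W →L[ℝ] W) (hMsa : ∀ u v : W, ⟪M u, v⟫ = ⟪u, M v⟫)
    (hMpsd : ∀ u : W, 0 ≤ ⟪u, M u⟫) (ρ : ℝ) (hρ0 : 0 < ρ) (hρ2 : ρ ≤ 2)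
    (x b y u v : W) (hy : y = (1 - ρ) • x + ρ • b)
    (h : 0 ≤ ⟪b - u, (M x - M b) - v⟫) :
    2 * ρ * ⟪b - u, v⟫ ≤ ⟪x - u, M (x - u)⟫ - ⟪y - u, M (y - u)⟫ := by
  obtain ⟨e, rfl⟩ : ∃ e, x = b + e := ⟨x - b, by abel⟩
  obtain ⟨c, rfl⟩ : ∃ c, b = c + u := ⟨b - u, by abel⟩
  have hyu : y - u = c + e - ρ • e := by rw [hy]; module
  have hxu : c + u + e - u = c + e := by abel
  have hM : M (c + u + e) - M (c + u) = M e := by rw [← map_sub]; congr 1; abel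
  rw [hM, add_sub_cancel_right, inner_sub_right] at h
  rw [hyu, hxu, add_sub_cancel_right]
  have hs : ⟪e, M c⟫ = ⟪c, M e⟫ := by rw [← hMsa, real_inner_comm]
  simp only [map_sub, map_add, map_smul, inner_sub_left, inner_sub_right, inner_add_left,
    inner_add_right, inner_smul_left, inner_smul_right, hs, conj_trivial]
  nlinarith [mul_nonneg hρ0.le h, mul_nonneg (mul_nonneg hρ0.le (sub_nonneg.2 hρ2)) (hMpsd e)]

/-- Ergodic convergence of the degenerate proximal point algorithm. -/
theorem stmt_7 {W : Type*} [NormedAddCommGroup W] [InnerProductSpace ℝ W]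
    [FiniteDimensional ℝ W]
    (M : W →L[ℝ] W)
    (hMsa : ∀ u v : W, ⟪M u, v⟫ = ⟪u, M v⟫)
    (hMpsd : ∀ u : W, 0 ≤ ⟪u, M u⟫)
    (T : W → Set W)
    (hT : ∀ w w' v v' : W, v ∈ T w → v' ∈ T w' → 0 ≤ ⟪w - w', v - v'⟫)
    (hTmax : ∀ wh vh : W, (∀ w' v' : W, v' ∈ T w' → 0 ≤ ⟪wh - w', vh - v'⟫) → vh ∈ T wh)
    (wstar : W) (hstar : (0 : W) ∈ T wstar)
    (hdom : ∀ v : W, ∃ u : W, v - M u ∈ T u)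
    (L : ℝ) (hL : 0 ≤ L)
    (hLip : ∀ v₁ v₂ u₁ u₂ : W, v₁ - M u₁ ∈ T u₁ → v₂ - M u₂ ∈ T u₂ →
      ‖u₁ - u₂‖ ≤ L * ‖v₁ - v₂‖)
    (ρ : ℝ) (hρ0 : 0 < ρ) (hρ2 : ρ ≤ 2)
    (w wb : ℕ → W)
    (hres : ∀ k : ℕ, M (w k) - M (wb k) ∈ T (wb k))
    (hupd : ∀ k : ℕ, w (k + 1) = (1 - ρ) • w k + ρ • wb k) :
    ∃ wh : W, (0 : W) ∈ T wh ∧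
      Filter.Tendsto
        (fun k : ℕ => (1 / ((k : ℝ) + 1)) • ∑ t ∈ Finset.range (k + 1), wb t)
        Filter.atTop (nhds wh) := by
  set a : ℕ → W := fun k => (1 / ((k : ℝ) + 1)) • ∑ t ∈ Finset.range (k + 1), wb t with ha
  have key : ∀ u v, v ∈ T u → ∀ k, 2 * ρ * ⟪wb k - u, v⟫ ≤
      ⟪w k - u, M (w k - u)⟫ - ⟪w (k + 1) - u, M (w (k + 1) - u)⟫ := fun u v hv k =>
    dppa_descent M hMsa hMpsd ρ hρ0 hρ2 _ _ _ u v (hupd k) (hT _ _ _ _ (hres k) hv)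
  have hanti : ∀ z, (0 : W) ∈ T z → Antitone fun k => ⟪w k - z, M (w k - z)⟫ := by
    intro z hz
    refine antitone_nat_of_succ_le fun k => ?_
    have := key z 0 hz k
    simp only [inner_zero_right, mul_zero] at this
    linarith
  have hconv : ∀ z, (0 : W) ∈ T z →
      ∃ l, Tendsto (fun k => ⟪w k - z, M (w k - z)⟫) atTop (𝓝 l) := fun z hz =>
    ⟨_, tendsto_atTop_ciInf (hanti z hz) ⟨0, by rintro _ ⟨k, rfl⟩; exact hMpsd _⟩⟩
  -- a zero `z` of `T` satisfies `z = (M + T)⁻¹ (M z)`, which lets `hLip` apply to it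
  have hfix : ∀ z, (0 : W) ∈ T z → M z - M z ∈ T z := fun z hz => by rwa [sub_self]
  have hbdd : ∃ R, ∀ k, ‖a k‖ ≤ R := by
    set C := √((‖M‖ + 1) * ⟪w 0 - wstar, M (w 0 - wstar)⟫)
    have hwb : ∀ k, ‖wb k‖ ≤ ‖wstar‖ + L * C := by
      intro k
      have h1 := hLip _ _ _ _ (hres k) (hfix _ hstar)
      have h2 : ‖M (w k) - M wstar‖ ≤ C := by
        rw [← map_sub]
        refine Real.le_sqrt_of_sq_le ((norm_sq_map_le M hMsa hMpsd _).trans ?_)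
        gcongr
        exact hanti _ hstar (Nat.zero_le k)
      have h3 := mul_le_mul_of_nonneg_left h2 hL
      have h4 := norm_le_norm_add_norm_sub' (wb k) wstar
      linarith
    refine ⟨‖wstar‖ + L * C, fun k => ?_⟩
    have hk : (0 : ℝ) < (k : ℝ) + 1 := by positivity
    have h1 : ‖∑ t ∈ Finset.range (k + 1), wb t‖ ≤ ((k : ℝ) + 1) * (‖wstar‖ + L * C) := by
      refine (norm_sum_le_of_le _ fun t _ => hwb t).trans ?_
      simp [mul_add]
    rw [ha, norm_smul, Real.norm_of_nonneg (by positivity), one_div, inv_mul_le_iff₀ hk]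
    exact h1
  obtain ⟨R, hR⟩ := hbdd
  have hclus : ∀ z (φ : ℕ → ℕ), Tendsto φ atTop atTop → Tendsto (a ∘ φ) atTop (𝓝 z) →
      (0 : W) ∈ T z := by
    intro z φ hφ hz
    refine hTmax z 0 fun u v hv => ?_
    have hsum : ∀ k, 2 * ρ * ⟪a k - u, v⟫ ≤ ⟪w 0 - u, M (w 0 - u)⟫ * (1 / ((k : ℝ) + 1)) := by
      intro k
      have hk : (0 : ℝ) < (k : ℝ) + 1 := by positivity
      have h1 := Finset.sum_le_sum fun t (_ : t ∈ Finset.range (k + 1)) => key u v hv t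
      rw [Finset.sum_range_sub' (fun t => ⟪w t - u, M (w t - u)⟫)] at h1
      have h2 : ∑ t ∈ Finset.range (k + 1), 2 * ρ * ⟪wb t - u, v⟫
          = ((k : ℝ) + 1) * (2 * ρ * ⟪a k - u, v⟫) := by
        rw [← Finset.mul_sum, ← sum_inner, Finset.sum_sub_distrib, ha]
        simp only [inner_sub_left, inner_smul_left, Finset.sum_const, Finset.card_range,
          ← Nat.cast_smul_eq_nsmul ℝ, conj_trivial]
        push_cast
        field_simp
      rw [h2] at h1
      rw [mul_one_div, le_div_iff₀ hk]
      linarith [hMpsd (w (k + 1) - u)]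
    have h1 : Tendsto (fun n => 2 * ρ * ⟪a (φ n) - u, v⟫) atTop (𝓝 (2 * ρ * ⟪z - u, v⟫)) :=
      ((hz.sub_const u).inner tendsto_const_nhds).const_mul _
    have h2 := ((tendsto_one_div_add_atTop_nhds_zero_nat (𝕜 := ℝ)).comp hφ).const_mul
      ⟪w 0 - u, M (w 0 - u)⟫
    have h3 := le_of_tendsto_of_tendsto' h1 h2 fun n => hsum (φ n)
    rw [mul_zero] at h3
    have h4 : ⟪z - u, v⟫ ≤ 0 := by
      by_contra hcon
      push Not at hcon
      have : 0 < 2 * ρ * ⟪z - u, v⟫ := by positivity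
      linarith
    rw [zero_sub, inner_neg_right]
    linarith
  have huniq : ∀ z₁ z₂ (φ₁ φ₂ : ℕ → ℕ), Tendsto φ₁ atTop atTop → Tendsto φ₂ atTop atTop →
      Tendsto (a ∘ φ₁) atTop (𝓝 z₁) → Tendsto (a ∘ φ₂) atTop (𝓝 z₂) → z₁ = z₂ := by
    intro z₁ z₂ φ₁ φ₂ hφ₁ hφ₂ h₁ h₂
    have hz₁ := hclus _ _ hφ₁ h₁
    have hz₂ := hclus _ _ hφ₂ h₂
    obtain ⟨l₁, hl₁⟩ := hconv _ hz₁
    obtain ⟨l₂, hl₂⟩ := hconv _ hz₂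
    -- polarization: `q (wᵏ - z₂) - q (wᵏ - z₁)` is `2 ⟪wᵏ, M (z₁ - z₂)⟫` up to a constant
    obtain ⟨l, hl⟩ : ∃ l, Tendsto (fun k => ⟪w k, M (z₁ - z₂)⟫) atTop (𝓝 l) := by
      refine ⟨_, (((hl₂.sub hl₁).add_const (⟪z₁, M z₁⟫ - ⟪z₂, M z₂⟫)).div_const 2).congr
        fun k => ?_⟩
      have e1 : ⟪z₁, M (w k)⟫ = ⟪w k, M z₁⟫ := by rw [← hMsa, real_inner_comm]
      have e2 : ⟪z₂, M (w k)⟫ = ⟪w k, M z₂⟫ := by rw [← hMsa, real_inner_comm]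
      simp only [map_sub, inner_sub_left, inner_sub_right, e1, e2]
      ring
    -- `w̄ᵏ` is an affine combination of `wᵏ⁺¹` and `wᵏ`, so its pairing has the same limit
    have hlb : Tendsto (fun k => ⟪wb k, M (z₁ - z₂)⟫) atTop (𝓝 l) := by
      have h := (((hl.comp (tendsto_add_atTop_nat 1)).sub (hl.const_mul (1 - ρ))).div_const ρ)
      have hlim : (l - (1 - ρ) * l) / ρ = l := by field_simp; ring
      rw [hlim] at h
      refine h.congr fun k => ?_
      simp only [Function.comp, hupd, inner_add_left, inner_smul_left, conj_trivial]
      field_simp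
      ring
    have hla : Tendsto (fun k => ⟪a k, M (z₁ - z₂)⟫) atTop (𝓝 l) := by
      refine (hlb.cesaro.comp (tendsto_add_atTop_nat 1)).congr fun k => ?_
      simp [ha, inner_smul_left, sum_inner]
    have e₁ := tendsto_nhds_unique (hla.comp hφ₁) (h₁.inner tendsto_const_nhds)
    have e₂ := tendsto_nhds_unique (hla.comp hφ₂) (h₂.inner tendsto_const_nhds)
    have hq : ⟪z₁ - z₂, M (z₁ - z₂)⟫ = 0 := by
      rw [inner_sub_left, ← e₁, ← e₂, sub_self]
    have hM0 := norm_sq_map_le M hMsa hMpsd (z₁ - z₂)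
    rw [hq, mul_zero] at hM0
    have hM : ‖M z₁ - M z₂‖ = 0 := by
      rw [← map_sub]
      exact pow_eq_zero_iff two_ne_zero |>.1 (le_antisymm hM0 (sq_nonneg _))
    have h := hLip _ _ _ _ (hfix _ hz₁) (hfix _ hz₂)
    rw [hM, mul_zero] at h
    exact sub_eq_zero.1 (norm_le_zero_iff.1 h)
  have hball : ∀ k, a k ∈ Metric.closedBall (0 : W) R := fun k => by simpa using hR k
  obtain ⟨z, -, φ, hφ, hz⟩ := (isCompact_closedBall (0 : W) R).tendsto_subseq hball
  refine ⟨z, hclus z φ hφ.tendsto_atTop hz, tendsto_of_subseq_tendsto fun ns hns => ?_⟩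
  obtain ⟨z', -, ψ, hψ, hz'⟩ :=
    (isCompact_closedBall (0 : W) R).tendsto_subseq fun n => hball (ns n)
  refine ⟨ψ, ?_⟩
  rw [huniq z z' φ (ns ∘ ψ) hφ.tendsto_atTop (hns.comp hψ.tendsto_atTop) hz hz']
  exact hz'
end

section
/- In the pADMM setting with finite-dimensional Y, Z, X, suppose additionally that B₁*B₁ + T₁ and B₂*B₂ + T₂ are positive definite (⟨y, (B₁*B₁ + T₁) y⟩ > 0 for all y ≠ 0, and ⟨z, (B₂*B₂ + T₂) z⟩ > 0 for all z ≠ 0), and that a KKT point (y*, z*, x*) exists. Then the ergodic sequence (ȳ_a^k, z̄_a^k, x̄_a^k) := (1/(k+1)) Σ_{t=0}^k (ȳ^t, z̄^t, x̄^t) converges, as k → ∞, to a triple (y°, z°, x°) which is itself a KKT point: for all y', f₁(y') ≥ f₁(y°) + ⟨−B₁* x°, y' − y°⟩; for all z', f₂(z') ≥ f₂(z°) + ⟨−B₂* x°, z' − z°⟩; and B₁ y° + B₂ z° = c. -/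
/-!
The iteration is a relaxed, degenerate proximal point method in the variable `w = (y, z, x)`:
with the positive semidefinite form
`M w w' = σ⁻¹ ⟪x + σ B₁ y, x' + σ B₁ y'⟫ + ⟪T₁ y, y'⟫ + ⟪T₂ z, z'⟫`
and the antisymmetric Lagrangian gap
`G u v = L(u.y, u.z; v.x) - L(v.y, v.z; u.x)`, `L(y, z; x) = f₁ y + f₂ z + ⟪x, B₁ y + B₂ z - c⟫`,
the four defining relations give `M (w̄ - w) (w̄ - u) ≤ G u w̄` for every `u`, and the KKT points are
exactly the `v` with `G u v ≥ 0` for all `u`.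

Expanding the square, `M (w⁺ - u) (w⁺ - u) - M (w - u) (w - u) ≤ 2ρ M (w̄ - w) (w̄ - u)` as soon as
`ρ ≤ 2` (`fejer_step`). Telescoping and concavity of `G u` show that every cluster point of the
averages of `w̄` is a KKT point (`gap_nonneg_of_cluster`). For a KKT point `u` the right-hand side
is nonpositive, so `M (w k - u) (w k - u)` converges; by polarisation `M (w̄ k) (p - q)` then
converges for any two cluster points `p`, `q`, whence `M (p - q) (p - q) = 0`, as in Opial's lemma
(`ergodic_tendsto`). Two KKT points at `M`-distance zero coincide: monotonicity gives
`⟪dx, B₁ dy⟫ = 0`, while `dx = -σ B₁ dy`, so `B₁ dy`, `dx`, `B₂ dz`, `T₁ dy`, `T₂ dz` all vanish.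

The sequence `w̄` is bounded although `w` need not be when `ρ = 2`: the `z`-subproblem controls
`σ ‖B₂ (z̄ - z⋆)‖² + ⟪T₂ (z̄ - z⋆), z̄ - z⋆⟫` by the `M`-distance of `w` to the KKT point, and then the
remaining components of `w̄` are controlled by `M` and `x̄ = x + σ (B₁ y + B₂ z̄ - c)`.
-/


open RealInnerProductSpace

/-! ### Ergodic convergence of degenerate proximal point iterations -/

section Abstract

variable {W : Type*} [NormedAddCommGroup W] [NormedSpace ℝ W]

/-- Ergodic (Cesàro) average of the first `k + 1` terms. -/
noncomputable def ergAvg (v : ℕ → W) (k : ℕ) : W :=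
  (1 / ((k : ℝ) + 1)) • ∑ t ∈ Finset.range (k + 1), v t

/-- One relaxed step moves the squared `M`-distance to any `u` by at most
`2ρ M (w̄ - w) (w̄ - u)`; this is where `ρ ≤ 2` enters. -/
lemma fejer_step_s8 (M : W →ₗ[ℝ] W →ₗ[ℝ] ℝ) (hsymm : ∀ u v, M u v = M v u)
    (hpsd : ∀ u, 0 ≤ M u u) {ρ : ℝ} (hρ0 : 0 < ρ) (hρ2 : ρ ≤ 2) {w wp wb : W}
    (hw : wp = (1 - ρ) • w + ρ • wb) (u : W) :
    M (wp - u) (wp - u) - M (w - u) (w - u) ≤ 2 * ρ * M (wb - w) (wb - u) := by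
  obtain ⟨a, ha⟩ : ∃ a, a = w - u := ⟨_, rfl⟩
  obtain ⟨d, hd⟩ : ∃ d, d = wb - w := ⟨_, rfl⟩
  have h1 : wp - u = a + ρ • d := by rw [hw, ha, hd]; module
  have h2 : wb - u = a + d := by rw [ha, hd]; module
  rw [h1, h2, ← ha, ← hd]
  simp only [map_add, map_smul, LinearMap.add_apply, LinearMap.smul_apply, smul_eq_mul]
  rw [hsymm a d]
  nlinarith [mul_nonneg (mul_nonneg hρ0.le (sub_nonneg.2 hρ2)) (hpsd d)]

variable [FiniteDimensional ℝ W]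

/-- Sublevel sets of a positive definite quadratic form are bounded: compare with its minimum on the
unit sphere. -/
lemma isBounded_of_quadratic (Q : W → ℝ) (hQc : Continuous Q)
    (hQh : ∀ (t : ℝ) w, Q (t • w) = t ^ 2 * Q w) (hQp : ∀ w, w ≠ 0 → 0 < Q w) (C : ℝ) :
    ∃ R, ∀ w, Q w ≤ C → ‖w‖ ≤ R := by
  rcases (Metric.sphere (0 : W) 1).eq_empty_or_nonempty with he | hne
  · refine ⟨0, fun w _ => ?_⟩
    by_contra! hw
    have : ‖w‖⁻¹ • w ∈ Metric.sphere (0 : W) 1 := by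
      simp [norm_smul, hw.ne']
    simp [he] at this
  · obtain ⟨v, hv, hmin⟩ := (isCompact_sphere (0 : W) 1).exists_isMinOn hne hQc.continuousOn
    have hv0 : v ≠ 0 := by
      rintro rfl
      simp at hv
    have hm : 0 < Q v := hQp v hv0
    refine ⟨Real.sqrt (C / Q v), fun w hw => ?_⟩
    apply Real.le_sqrt_of_sq_le
    rw [le_div_iff₀ hm]
    refine le_trans ?_ hw
    by_cases hw0 : w = 0
    · have := hQh 0 (0 : W)
      simp [hw0] at this ⊢
      exact this.ge
    · have hn : 0 < ‖w‖ := norm_pos_iff.2 hw0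
      have hmem : ‖w‖⁻¹ • w ∈ Metric.sphere (0 : W) 1 := by
        simp [norm_smul, hn.ne']
      have h1 : Q v ≤ Q (‖w‖⁻¹ • w) := hmin hmem
      have h2 : Q w = ‖w‖ ^ 2 * Q (‖w‖⁻¹ • w) := by
        rw [← hQh, smul_smul, mul_inv_cancel₀ hn.ne', one_smul]
      rw [h2]
      gcongr

/-- Cluster points of the ergodic averages have nonnegative gap: averaging the step inequality,
the telescoped right-hand side is `≥ -M (w 0 - u) (w 0 - u) / (2ρ (k + 1))`. -/
lemma gap_nonneg_of_cluster (M : W →ₗ[ℝ] W →ₗ[ℝ] ℝ) (hsymm : ∀ u v, M u v = M v u)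
    (hpsd : ∀ u, 0 ≤ M u u) {ρ : ℝ} (hρ0 : 0 < ρ) (hρ2 : ρ ≤ 2) {w wb : ℕ → W}
    (hw : ∀ k, w (k + 1) = (1 - ρ) • w k + ρ • wb k)
    (G : W → W → ℝ) (hconc : ∀ u, ConcaveOn ℝ Set.univ (G u))
    (hstep : ∀ k u, M (wb k - w k) (wb k - u) ≤ G u (wb k))
    {φ : ℕ → ℕ} (hφ : Filter.Tendsto φ Filter.atTop Filter.atTop) {p : W}
    (hp : Filter.Tendsto (fun n => ergAvg wb (φ n)) Filter.atTop (nhds p)) (u : W) :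
    0 ≤ G u p := by
  have hlow : ∀ k : ℕ, -(M (w 0 - u) (w 0 - u) / (2 * ρ)) * (1 / ((k : ℝ) + 1))
      ≤ G u (ergAvg wb k) := by
    intro k
    have hk : (0 : ℝ) < (k : ℝ) + 1 := by positivity
    have hJ : ∑ t ∈ Finset.range (k + 1), (1 / ((k : ℝ) + 1)) • G u (wb t)
        ≤ G u (∑ t ∈ Finset.range (k + 1), (1 / ((k : ℝ) + 1)) • wb t) := by
      apply (hconc u).le_map_sum
      · intro i _; positivity
      · simp; field_simp
      · simp
    have hsum : -(M (w 0 - u) (w 0 - u) / (2 * ρ)) ≤ ∑ t ∈ Finset.range (k + 1), G u (wb t) := by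
      have h1 : ∑ t ∈ Finset.range (k + 1),
          (M (w (t + 1) - u) (w (t + 1) - u) - M (w t - u) (w t - u))
          ≤ ∑ t ∈ Finset.range (k + 1), 2 * ρ * G u (wb t) := by
        refine Finset.sum_le_sum fun t _ => ?_
        refine (fejer_step_s8 M hsymm hpsd hρ0 hρ2 (hw t) u).trans ?_
        have := hstep t u
        gcongr
      rw [Finset.sum_range_sub (fun t => M (w t - u) (w t - u)), ← Finset.mul_sum] at h1
      have h2 := hpsd (w (k + 1) - u)
      rw [← neg_div, div_le_iff₀ (by positivity)]
      linarith
    rw [← Finset.smul_sum, ← Finset.smul_sum, smul_eq_mul] at hJ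
    refine le_trans ?_ hJ
    rw [mul_comm]
    gcongr
  have hc : Continuous (G u) := by
    have := (hconc u).continuousOn isOpen_univ
    exact continuousOn_univ.1 this
  have hl := (hc.tendsto p).comp hp
  have h0 : Filter.Tendsto (fun n => -(M (w 0 - u) (w 0 - u) / (2 * ρ)) * (1 / ((φ n : ℝ) + 1)))
      Filter.atTop (nhds 0) := by
    have := (tendsto_one_div_add_atTop_nhds_zero_nat (𝕜 := ℝ)).comp hφ
    simpa using this.const_mul (-(M (w 0 - u) (w 0 - u) / (2 * ρ)))
  exact le_of_tendsto_of_tendsto' h0 hl fun n => hlow (φ n)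

/-- Ergodic convergence of the relaxed degenerate proximal point iteration attached to the form `M`
and the gap function `G`. -/
lemma ergodic_tendsto (M : W →ₗ[ℝ] W →ₗ[ℝ] ℝ) (hsymm : ∀ u v, M u v = M v u)
    (hpsd : ∀ u, 0 ≤ M u u) {ρ : ℝ} (hρ0 : 0 < ρ) (hρ2 : ρ ≤ 2) {w wb : ℕ → W}
    (hw : ∀ k, w (k + 1) = (1 - ρ) • w k + ρ • wb k)
    (G : W → W → ℝ) (hanti : ∀ u v, G u v = -G v u) (hconc : ∀ u, ConcaveOn ℝ Set.univ (G u))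
    (hstep : ∀ k u, M (wb k - w k) (wb k - u) ≤ G u (wb k))
    (huniq : ∀ p q, (∀ u, 0 ≤ G u p) → (∀ u, 0 ≤ G u q) → M (p - q) (p - q) = 0 → p = q)
    {R : ℝ} (hR : ∀ k, ‖wb k‖ ≤ R) :
    ∃ p, (∀ u, 0 ≤ G u p) ∧ Filter.Tendsto (ergAvg wb) Filter.atTop (nhds p) := by
  have hball : ∀ k, ergAvg wb k ∈ Metric.closedBall (0 : W) R := by
    intro k
    unfold ergAvg
    rw [Finset.smul_sum]
    refine (convex_closedBall (0 : W) R).sum_mem (fun i _ => by positivity) ?_ ?_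
    · simp; field_simp
    · intro i _; simpa using hR i
  have hconv : ∀ u, (∀ v, 0 ≤ G v u) →
      ∃ l, Filter.Tendsto (fun k => M (w k - u) (w k - u)) Filter.atTop (nhds l) := by
    intro u hu
    refine ⟨_, tendsto_atTop_ciInf (antitone_nat_of_succ_le fun k => ?_) ⟨0, ?_⟩⟩
    · have h1 := fejer_step_s8 M hsymm hpsd hρ0 hρ2 (hw k) u
      have h2 := hstep k u
      rw [hanti] at h2
      have h3 := hu (wb k)
      have : 2 * ρ * M (wb k - w k) (wb k - u) ≤ 0 :=
        mul_nonpos_of_nonneg_of_nonpos (by positivity) (by linarith)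
      linarith
    · rintro _ ⟨k, rfl⟩
      exact hpsd _
  have hcl : ∀ p q, (∀ u, 0 ≤ G u p) → (∀ u, 0 ≤ G u q) →
      ∃ l, Filter.Tendsto (fun k => M (ergAvg wb k) (p - q)) Filter.atTop (nhds l) := by
    intro p q hp hq
    obtain ⟨l₁, h₁⟩ := hconv p hp
    obtain ⟨l₂, h₂⟩ := hconv q hq
    have hwl : ∃ l, Filter.Tendsto (fun k => M (w k) (p - q)) Filter.atTop (nhds l) := by
      refine ⟨_, (((h₂.sub h₁).add_const (M p p - M q q)).const_mul (1 / 2)).congr fun k => ?_⟩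
      simp only [map_sub, LinearMap.sub_apply]
      rw [hsymm p (w k), hsymm q (w k)]
      ring
    obtain ⟨l, hl⟩ := hwl
    have hl' := (Filter.tendsto_add_atTop_iff_nat 1).2 hl
    -- `w̄ = w + ρ⁻¹ (w⁺ - w)`, so the pairing of `w̄` with `p - q` has the same limit
    have hb : Filter.Tendsto (fun k => M (wb k) (p - q)) Filter.atTop (nhds l) := by
      have h3 := hl.add ((hl'.sub hl).const_mul ρ⁻¹)
      simp only [sub_self, mul_zero, add_zero] at h3
      refine h3.congr fun k => ?_
      rw [hw k]
      simp only [map_add, map_smul, LinearMap.add_apply, LinearMap.smul_apply, smul_eq_mul]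
      field_simp
      ring
    refine ⟨l, ((Filter.tendsto_add_atTop_iff_nat 1).2 hb.cesaro).congr fun k => ?_⟩
    simp [ergAvg, LinearMap.sum_apply]
  obtain ⟨p, -, φ, hφ, hp⟩ := tendsto_subseq_of_bounded Metric.isBounded_closedBall hball
  have hGp := gap_nonneg_of_cluster M hsymm hpsd hρ0 hρ2 hw G hconc hstep hφ.tendsto_atTop hp
  refine ⟨p, hGp, Filter.tendsto_of_subseq_tendsto fun ns hns => ?_⟩
  obtain ⟨q, -, ψ, hψ, hq⟩ :=
    tendsto_subseq_of_bounded (x := fun n => ergAvg wb (ns n)) Metric.isBounded_closedBall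
      fun n => hball _
  have hGq := gap_nonneg_of_cluster M hsymm hpsd hρ0 hρ2 hw G hconc hstep
    (hns.comp hψ.tendsto_atTop) hq
  refine ⟨ψ, ?_⟩
  have hpq : p = q := by
    refine huniq p q hGp hGq ?_
    obtain ⟨l, hl⟩ := hcl p q hGp hGq
    have hMc : Continuous fun v => M v (p - q) :=
      (M.flip (p - q)).continuous_of_finiteDimensional
    have e1 := tendsto_nhds_unique ((hMc.tendsto p).comp hp) (hl.comp hφ.tendsto_atTop)
    have e2 := tendsto_nhds_unique ((hMc.tendsto q).comp hq)
      (hl.comp (hns.comp hψ.tendsto_atTop))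
    rw [M.map_sub, LinearMap.sub_apply, e1, e2, sub_self]
  rw [hpq]
  exact hq

end Abstract

/-! ### The proximal metric and the Lagrangian gap of pADMM -/

section PADMM

variable {Y Z X : Type*}
    [NormedAddCommGroup Y] [InnerProductSpace ℝ Y]
    [NormedAddCommGroup Z] [InnerProductSpace ℝ Z]
    [NormedAddCommGroup X] [InnerProductSpace ℝ X]

/-- The degenerate proximal metric
`(w, w') ↦ σ⁻¹ ⟪x + σ B₁ y, x' + σ B₁ y'⟫ + ⟪T₁ y, y'⟫ + ⟪T₂ z, z'⟫` on triples `w = (y, z, x)`. -/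
noncomputable def admmForm (B₁ : Y →L[ℝ] X) (σ : ℝ) (T₁ : Y →L[ℝ] Y) (T₂ : Z →L[ℝ] Z) :
    Y × Z × X →ₗ[ℝ] Y × Z × X →ₗ[ℝ] ℝ :=
  LinearMap.mk₂ ℝ (fun w w' => σ⁻¹ * ⟪w.2.2 + σ • B₁ w.1, w'.2.2 + σ • B₁ w'.1⟫
      + ⟪T₁ w.1, w'.1⟫ + ⟪T₂ w.2.1, w'.2.1⟫)
    (by intro a b d
        simp only [Prod.fst_add, Prod.snd_add, map_add, smul_add, inner_add_left, inner_add_right]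
        ring)
    (by intro t a d
        simp only [Prod.smul_fst, Prod.smul_snd, map_smul, smul_eq_mul, inner_add_left,
          inner_add_right, real_inner_smul_left, real_inner_smul_right]
        ring)
    (by intro a b d
        simp only [Prod.fst_add, Prod.snd_add, map_add, smul_add, inner_add_left, inner_add_right]
        ring)
    (by intro t a d
        simp only [Prod.smul_fst, Prod.smul_snd, map_smul, smul_eq_mul, inner_add_left,
          inner_add_right, real_inner_smul_left, real_inner_smul_right]
        ring)

lemma admmForm_apply (B₁ : Y →L[ℝ] X) (σ : ℝ) (T₁ : Y →L[ℝ] Y) (T₂ : Z →L[ℝ] Z)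
    (w w' : Y × Z × X) :
    admmForm B₁ σ T₁ T₂ w w' = σ⁻¹ * ⟪w.2.2 + σ • B₁ w.1, w'.2.2 + σ • B₁ w'.1⟫
      + ⟪T₁ w.1, w'.1⟫ + ⟪T₂ w.2.1, w'.2.1⟫ := rfl

/-- The Lagrangian gap `L(u.y, u.z; v.x) - L(v.y, v.z; u.x)` for
`L(y, z; x) = f₁ y + f₂ z + ⟪x, B₁ y + B₂ z - c⟫`. -/
noncomputable def admmGap (B₁ : Y →L[ℝ] X) (B₂ : Z →L[ℝ] X) (c : X) (f₁ : Y → ℝ) (f₂ : Z → ℝ)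
    (u v : Y × Z × X) : ℝ :=
  f₁ u.1 + f₂ u.2.1 - f₁ v.1 - f₂ v.2.1 + ⟪v.2.2, B₁ u.1 + B₂ u.2.1 - c⟫
    - ⟪B₁ v.1 + B₂ v.2.1 - c, u.2.2⟫

lemma admmGap_anti (B₁ : Y →L[ℝ] X) (B₂ : Z →L[ℝ] X) (c : X) (f₁ : Y → ℝ) (f₂ : Z → ℝ)
    (u v : Y × Z × X) : admmGap B₁ B₂ c f₁ f₂ u v = -admmGap B₁ B₂ c f₁ f₂ v u := by
  unfold admmGap
  rw [real_inner_comm v.2.2, real_inner_comm u.2.2]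
  ring

lemma admmGap_concave (B₁ : Y →L[ℝ] X) (B₂ : Z →L[ℝ] X) (c : X) (f₁ : Y → ℝ) (f₂ : Z → ℝ)
    (hf₁ : ConvexOn ℝ Set.univ f₁) (hf₂ : ConvexOn ℝ Set.univ f₂) (u : Y × Z × X) :
    ConcaveOn ℝ Set.univ (admmGap B₁ B₂ c f₁ f₂ u) := by
  refine ⟨convex_univ, fun v _ v' _ a b ha hb hab => ?_⟩
  have h1 := hf₁.2 (Set.mem_univ v.1) (Set.mem_univ v'.1) ha hb hab
  have h2 := hf₂.2 (Set.mem_univ v.2.1) (Set.mem_univ v'.2.1) ha hb hab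
  obtain rfl : b = 1 - a := by linarith
  unfold admmGap
  simp only [Prod.fst_add, Prod.snd_add, Prod.smul_fst, Prod.smul_snd, map_add, map_smul,
    smul_eq_mul, inner_add_left, inner_sub_left, real_inner_smul_left] at h1 h2 ⊢
  linarith

/-- Points with nonnegative gap against every triple are KKT points: feasibility follows by varying
the multiplier, the two subgradient inequalities by varying one primal variable at a time. -/
lemma kkt_of_gap_nonneg (B₁ : Y →L[ℝ] X) (B₂ : Z →L[ℝ] X) (c : X) (f₁ : Y → ℝ) (f₂ : Z → ℝ)
    {v : Y × Z × X} (hv : ∀ u, 0 ≤ admmGap B₁ B₂ c f₁ f₂ u v) :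
    (∀ y', f₁ y' ≥ f₁ v.1 - ⟪v.2.2, B₁ (y' - v.1)⟫) ∧
    (∀ z', f₂ z' ≥ f₂ v.2.1 - ⟪v.2.2, B₂ (z' - v.2.1)⟫) ∧
    B₁ v.1 + B₂ v.2.1 = c := by
  have hfeas : B₁ v.1 + B₂ v.2.1 - c = 0 := by
    have h := hv (v.1, v.2.1, v.2.2 + (B₁ v.1 + B₂ v.2.1 - c))
    simp only [admmGap, inner_add_right (B₁ v.1 + B₂ v.2.1 - c)] at h
    rw [real_inner_comm] at h
    have h2 : ⟪B₁ v.1 + B₂ v.2.1 - c, B₁ v.1 + B₂ v.2.1 - c⟫ ≤ 0 := by linarith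
    exact real_inner_self_nonpos.1 h2
  have hc : c = B₁ v.1 + B₂ v.2.1 := (sub_eq_zero.1 hfeas).symm
  refine ⟨fun y' => ?_, fun z' => ?_, hc.symm⟩
  · have h := hv (y', v.2.1, v.2.2)
    have e : B₁ y' + B₂ v.2.1 - c = B₁ (y' - v.1) := by rw [hc, map_sub]; abel
    simp only [admmGap, hfeas, e, inner_zero_left] at h
    linarith
  · have h := hv (v.1, z', v.2.2)
    have e : B₁ v.1 + B₂ z' - c = B₂ (z' - v.2.1) := by rw [hc, map_sub]; abel
    simp only [admmGap, hfeas, e, inner_zero_left] at h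
    linarith

lemma eq_zero_of_forms {U V : Type*} [NormedAddCommGroup U] [InnerProductSpace ℝ U]
    [NormedAddCommGroup V] [InnerProductSpace ℝ V] [CompleteSpace U] [CompleteSpace V]
    (B : U →L[ℝ] V) (T : U →L[ℝ] U)
    (hpd : ∀ u : U, u ≠ 0 → 0 < ⟪u, ContinuousLinearMap.adjoint B (B u) + T u⟫)
    {u : U} (hB : B u = 0) (hT : ⟪T u, u⟫ = 0) : u = 0 := by
  by_contra h
  have := hpd u h
  rw [hB, map_zero, zero_add, real_inner_comm, hT] at this
  exact lt_irrefl _ this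

/-- Young's inequality for a positive semidefinite self-adjoint operator. -/
lemma two_mul_inner_le {U : Type*} [NormedAddCommGroup U] [InnerProductSpace ℝ U]
    (T : U →L[ℝ] U) (hsa : ∀ u v : U, ⟪T u, v⟫ = ⟪u, T v⟫) (hpsd : ∀ u : U, 0 ≤ ⟪u, T u⟫)
    (u v : U) : 2 * ⟪T u, v⟫ ≤ ⟪T u, u⟫ + ⟪T v, v⟫ := by
  have h := hpsd (u - v)
  rw [← hsa] at h
  simp only [map_sub, inner_sub_left, inner_sub_right] at h
  have e : ⟪T v, u⟫ = ⟪T u, v⟫ := by rw [hsa, real_inner_comm]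
  linarith

end PADMM

/-! ### Convergence of pADMM -/

/-- Ergodic convergence of the pADMM (incl. the Peaceman–Rachford splitting method)
to a KKT point. -/
theorem stmt_8 {Y Z X : Type*}
    [NormedAddCommGroup Y] [InnerProductSpace ℝ Y] [FiniteDimensional ℝ Y]
    [NormedAddCommGroup Z] [InnerProductSpace ℝ Z] [FiniteDimensional ℝ Z]
    [NormedAddCommGroup X] [InnerProductSpace ℝ X] [FiniteDimensional ℝ X]
    (B₁ : Y →L[ℝ] X) (B₂ : Z →L[ℝ] X) (c : X)
    (σ : ℝ) (hσ : 0 < σ) (ρ : ℝ) (hρ0 : 0 < ρ) (hρ2 : ρ ≤ 2)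
    (T₁ : Y →L[ℝ] Y) (hT₁sa : ∀ u v : Y, ⟪T₁ u, v⟫ = ⟪u, T₁ v⟫)
    (hT₁psd : ∀ u : Y, 0 ≤ ⟪u, T₁ u⟫)
    (T₂ : Z →L[ℝ] Z) (hT₂sa : ∀ u v : Z, ⟪T₂ u, v⟫ = ⟪u, T₂ v⟫)
    (hT₂psd : ∀ u : Z, 0 ≤ ⟪u, T₂ u⟫)
    (f₁ : Y → ℝ) (hf₁ : ConvexOn ℝ Set.univ f₁)
    (f₂ : Z → ℝ) (hf₂ : ConvexOn ℝ Set.univ f₂)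
    (hpd₁ : ∀ y : Y, y ≠ 0 → 0 < ⟪y, ContinuousLinearMap.adjoint B₁ (B₁ y) + T₁ y⟫)
    (hpd₂ : ∀ z : Z, z ≠ 0 → 0 < ⟪z, ContinuousLinearMap.adjoint B₂ (B₂ z) + T₂ z⟫)
    (ystar : Y) (zstar : Z) (xstar : X)
    (hK1 : ∀ y' : Y, f₁ y' ≥ f₁ ystar + ⟪-(ContinuousLinearMap.adjoint B₁ xstar), y' - ystar⟫)
    (hK2 : ∀ z' : Z, f₂ z' ≥ f₂ zstar + ⟪-(ContinuousLinearMap.adjoint B₂ xstar), z' - zstar⟫)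
    (hK3 : B₁ ystar + B₂ zstar = c)
    (y : ℕ → Y) (z : ℕ → Z) (x : ℕ → X)
    (yb : ℕ → Y) (zb : ℕ → Z) (xb : ℕ → X)
    (H1 : ∀ k : ℕ, ∀ z' : Z, f₂ z' ≥ f₂ (zb k) +
      ⟪-(ContinuousLinearMap.adjoint B₂ (xb k)) - T₂ (zb k - z k), z' - zb k⟫)
    (H2 : ∀ k : ℕ, xb k = x k + σ • (B₁ (y k) + B₂ (zb k) - c))
    (H3 : ∀ k : ℕ, ∀ y' : Y, f₁ y' ≥ f₁ (yb k) +
      ⟪-(ContinuousLinearMap.adjoint B₁ (xb k + σ • (B₁ (yb k) + B₂ (zb k) - c)))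
        - T₁ (yb k - y k), y' - yb k⟫)
    (H4y : ∀ k : ℕ, y (k + 1) = (1 - ρ) • y k + ρ • yb k)
    (H4z : ∀ k : ℕ, z (k + 1) = (1 - ρ) • z k + ρ • zb k)
    (H4x : ∀ k : ℕ, x (k + 1) = (1 - ρ) • x k + ρ • xb k) :
    ∃ (yo : Y) (zo : Z) (xo : X),
      (∀ y' : Y, f₁ y' ≥ f₁ yo + ⟪-(ContinuousLinearMap.adjoint B₁ xo), y' - yo⟫) ∧
      (∀ z' : Z, f₂ z' ≥ f₂ zo + ⟪-(ContinuousLinearMap.adjoint B₂ xo), z' - zo⟫) ∧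
      B₁ yo + B₂ zo = c ∧
      Filter.Tendsto (fun k : ℕ => (1 / ((k : ℝ) + 1)) • ∑ t ∈ Finset.range (k + 1), yb t)
        Filter.atTop (nhds yo) ∧
      Filter.Tendsto (fun k : ℕ => (1 / ((k : ℝ) + 1)) • ∑ t ∈ Finset.range (k + 1), zb t)
        Filter.atTop (nhds zo) ∧
      Filter.Tendsto (fun k : ℕ => (1 / ((k : ℝ) + 1)) • ∑ t ∈ Finset.range (k + 1), xb t)
        Filter.atTop (nhds xo) := by
  obtain ⟨M, hM⟩ : ∃ M, M = admmForm B₁ σ T₁ T₂ := ⟨_, rfl⟩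
  have hMa : ∀ w w', M w w' = σ⁻¹ * ⟪w.2.2 + σ • B₁ w.1, w'.2.2 + σ • B₁ w'.1⟫
      + ⟪T₁ w.1, w'.1⟫ + ⟪T₂ w.2.1, w'.2.1⟫ := by
    intro w w'; rw [hM]; rfl
  have hT₁' : ∀ u : Y, 0 ≤ ⟪T₁ u, u⟫ := fun u => by rw [hT₁sa]; exact hT₁psd u
  have hT₂' : ∀ u : Z, 0 ≤ ⟪T₂ u, u⟫ := fun u => by rw [hT₂sa]; exact hT₂psd u
  have hσi : 0 < σ⁻¹ := inv_pos.2 hσ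
  have hsymm : ∀ u v, M u v = M v u := by
    intro u v
    rw [hMa, hMa, real_inner_comm, hT₁sa, real_inner_comm (u.1), hT₂sa, real_inner_comm (u.2.1)]
  have hpsd : ∀ u, 0 ≤ M u u := by
    intro u
    rw [hMa]
    have h1 := hT₁' u.1
    have h2 := hT₂' u.2.1
    have h3 := mul_nonneg hσi.le (real_inner_self_nonneg (x := u.2.2 + σ • B₁ u.1))
    linarith
  obtain ⟨w, hwdef⟩ : ∃ w : ℕ → Y × Z × X, w = fun k => (y k, z k, x k) := ⟨_, rfl⟩
  obtain ⟨wb, hwbdef⟩ : ∃ wb : ℕ → Y × Z × X, wb = fun k => (yb k, zb k, xb k) := ⟨_, rfl⟩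
  have hw : ∀ k, w (k + 1) = (1 - ρ) • w k + ρ • wb k := by
    intro k
    simp only [hwdef, hwbdef, H4y k, H4z k, H4x k, Prod.smul_mk, Prod.mk_add_mk]
  have hstep : ∀ k u, M (wb k - w k) (wb k - u) ≤ admmGap B₁ B₂ c f₁ f₂ u (wb k) := by
    intro k u
    obtain ⟨u1, u2, u3⟩ := u
    have h1 := H1 k u2
    have h3 := H3 k u1
    have e : xb k - x k + σ • B₁ (yb k - y k) = σ • (B₁ (yb k) + B₂ (zb k) - c) := by
      rw [H2 k, map_sub]; module
    rw [hMa]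
    simp only [hwdef, hwbdef, Prod.fst_sub, Prod.snd_sub, admmGap]
    rw [e, real_inner_smul_left, ← mul_assoc, inv_mul_cancel₀ hσ.ne', one_mul]
    simp only [← map_neg, inner_sub_left, ContinuousLinearMap.adjoint_inner_left] at h1 h3
    simp only [map_sub, inner_neg_left, inner_add_left, inner_sub_left, inner_add_right,
      inner_sub_right, smul_add, smul_sub, real_inner_smul_left, real_inner_smul_right]
      at h1 h3 ⊢
    simp only [real_inner_comm (B₁ (yb k)) (xb k), real_inner_comm (B₂ (zb k)) (xb k),
      real_inner_comm c (xb k)] at h1 h3 ⊢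
    linarith
  obtain ⟨ws, hws⟩ : ∃ ws : Y × Z × X, ws = (ystar, zstar, xstar) := ⟨_, rfl⟩
  have hgs : ∀ v, 0 ≤ admmGap B₁ B₂ c f₁ f₂ v ws := by
    intro v
    have h1 := hK1 v.1
    have h2 := hK2 v.2.1
    simp only [← map_neg, ContinuousLinearMap.adjoint_inner_left] at h1 h2
    simp only [hws, admmGap, hK3, sub_self, inner_zero_left]
    rw [← hK3]
    simp only [map_sub, inner_neg_left, inner_add_right, inner_sub_right] at h1 h2 ⊢
    linarith
  have hmono : ∀ k, M (wb k - w k) (wb k - ws) ≤ 0 := by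
    intro k
    have h2 := hstep k ws
    rw [admmGap_anti] at h2
    linarith [hgs (wb k)]
  obtain ⟨C, hC⟩ : ∃ C, C = M (w 0 - ws) (w 0 - ws) := ⟨_, rfl⟩
  have hfej : ∀ k, M (w k - ws) (w k - ws) ≤ C := by
    intro k
    induction k with
    | zero => exact hC.ge
    | succ k ih =>
      have h1 := fejer_step_s8 M hsymm hpsd hρ0 hρ2 (hw k) ws
      have : 2 * ρ * M (wb k - w k) (wb k - ws) ≤ 0 :=
        mul_nonpos_of_nonneg_of_nonpos (by positivity) (hmono k)
      linarith
  have hfejb : ∀ k, M (wb k - ws) (wb k - ws) ≤ C := by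
    intro k
    have h1 := hpsd (wb k - w k)
    have h2 := hmono k
    have e : wb k - ws = (wb k - w k) + (w k - ws) := by abel
    rw [e] at h2 ⊢
    simp only [map_add, LinearMap.add_apply] at h2 ⊢
    rw [hsymm (w k - ws) (wb k - w k)]
    linarith [hfej k]
  -- `Q` is positive definite although `M` is only semidefinite, and it stays bounded along `w̄ - w⋆`;
  -- the vector `x - σ B₂ z` enters because along `w̄ - w⋆` it depends on `w` only through `M`
  obtain ⟨Q, hQ⟩ : ∃ Q : Y × Z × X → ℝ, Q = fun v =>
      (σ * ⟪B₂ v.2.1, B₂ v.2.1⟫ + ⟪T₂ v.2.1, v.2.1⟫)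
      + σ⁻¹ * ⟪v.2.2 - σ • B₂ v.2.1, v.2.2 - σ • B₂ v.2.1⟫ + M v v := ⟨_, rfl⟩
  have hQc : Continuous Q := by
    rw [hQ]
    simp only [hMa]
    fun_prop
  have hQh : ∀ (t : ℝ) v, Q (t • v) = t ^ 2 * Q v := by
    intro t v
    have e : t • v.2.2 - σ • t • B₂ v.2.1 = t • (v.2.2 - σ • B₂ v.2.1) := by module
    simp only [hQ, Prod.smul_fst, Prod.smul_snd, map_smul, LinearMap.smul_apply, smul_eq_mul, e,
      real_inner_smul_left, real_inner_smul_right]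
    ring
  have hQp : ∀ v, v ≠ 0 → 0 < Q v := by
    intro v hv
    by_contra! hle
    apply hv
    simp only [hQ, hMa] at hle
    have h1 := mul_nonneg hσ.le (real_inner_self_nonneg (x := B₂ v.2.1))
    have h2 := hT₂' v.2.1
    have h3 := mul_nonneg hσi.le (real_inner_self_nonneg (x := v.2.2 - σ • B₂ v.2.1))
    have h4 := mul_nonneg hσi.le (real_inner_self_nonneg (x := v.2.2 + σ • B₁ v.1))
    have h5 := hT₁' v.1
    have key : ∀ (t : ℝ) (a : X), 0 < t → t * ⟪a, a⟫ ≤ 0 → a = 0 := by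
      intro t a ht h
      exact real_inner_self_nonpos.1 (nonpos_of_mul_nonpos_right h ht)
    have g1 : B₂ v.2.1 = 0 := key σ _ hσ (by linarith)
    have g2 : v.2.1 = 0 := eq_zero_of_forms B₂ T₂ hpd₂ g1 (by linarith)
    have g3 : v.2.2 - σ • B₂ v.2.1 = 0 := key σ⁻¹ _ hσi (by linarith)
    have g4 : v.2.2 + σ • B₁ v.1 = 0 := key σ⁻¹ _ hσi (by linarith)
    have g5 : v.2.2 = 0 := by simpa [g1] using g3
    have g6 : B₁ v.1 = 0 := by
      rw [g5, zero_add] at g4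
      exact (smul_eq_zero.1 g4).resolve_left hσ.ne'
    have g7 : v.1 = 0 := eq_zero_of_forms B₁ T₁ hpd₁ g6 (by linarith)
    exact Prod.ext g7 (Prod.ext g2 g5)
  have hQb : ∀ k, Q (wb k - ws) ≤ 3 * C := by
    intro k
    obtain ⟨s, hs⟩ : ∃ s, s = x k - xstar + σ • B₁ (y k - ystar) := ⟨_, rfl⟩
    obtain ⟨e, he⟩ : ∃ e, e = zb k - zstar := ⟨_, rfl⟩
    have hx : xb k - xstar = s + σ • B₂ e := by
      rw [H2 k, hs, he, ← hK3, map_sub, map_sub]; module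
    have hs2 : σ⁻¹ * ⟪s, s⟫ + ⟪T₂ (z k - zstar), z k - zstar⟫ ≤ C := by
      have h1 := hfej k
      rw [hMa] at h1
      simp only [hwdef, hws, Prod.fst_sub, Prod.snd_sub, ← hs] at h1
      linarith [hT₁' (y k - ystar)]
    -- monotonicity of `∂f₂` between `z̄` and `z⋆`, then Young's inequality on both cross terms
    have hz : σ * ⟪B₂ e, B₂ e⟫ + ⟪T₂ e, e⟫ ≤ C := by
      have h1 := H1 k zstar
      have h2 := hK2 (zb k)
      have e1 : zstar - zb k = -e := by rw [he]; abel
      have e2 : zb k - z k = e - (z k - zstar) := by rw [he]; abel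
      have e3 : xb k = xstar + (s + σ • B₂ e) := by rw [← hx]; abel
      rw [e1, e2, e3] at h1
      rw [← he] at h2
      simp only [← map_neg, inner_sub_left, ContinuousLinearMap.adjoint_inner_left] at h1 h2
      simp only [map_sub T₂ e, map_neg, inner_neg_left, inner_neg_right, inner_add_left,
        inner_sub_left, real_inner_smul_left] at h1 h2
      have h3 := two_mul_inner_le T₂ hT₂sa hT₂psd (z k - zstar) e
      have h4 : 0 ≤ σ⁻¹ * ⟪s + σ • B₂ e, s + σ • B₂ e⟫ :=
        mul_nonneg hσi.le real_inner_self_nonneg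
      have h5 : σ⁻¹ * ⟪s + σ • B₂ e, s + σ • B₂ e⟫
          = σ⁻¹ * ⟪s, s⟫ + 2 * ⟪s, B₂ e⟫ + σ * ⟪B₂ e, B₂ e⟫ := by
        simp only [inner_add_left, inner_add_right, real_inner_smul_left, real_inner_smul_right]
        rw [real_inner_comm s (B₂ e)]
        field_simp
        ring
      linarith
    have hf := hfejb k
    have h6 : Q (wb k - ws) = (σ * ⟪B₂ e, B₂ e⟫ + ⟪T₂ e, e⟫) + σ⁻¹ * ⟪s, s⟫
        + M (wb k - ws) (wb k - ws) := by
      have e4 : xb k - xstar - σ • B₂ e = s := by rw [hx]; abel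
      simp only [hQ]
      congr 1
      simp only [hwbdef, hws, Prod.fst_sub, Prod.snd_sub, ← he, e4]
    rw [h6]
    linarith [hT₂' (z k - zstar)]
  obtain ⟨R, hR⟩ := isBounded_of_quadratic Q hQc hQh hQp (3 * C)
  have hbdd : ∀ k, ‖wb k‖ ≤ R + ‖ws‖ := by
    intro k
    have h1 := hR _ (hQb k)
    have h2 := norm_add_le (wb k - ws) ws
    rw [sub_add_cancel] at h2
    linarith
  have huniq : ∀ p q, (∀ u, 0 ≤ admmGap B₁ B₂ c f₁ f₂ u p) →
      (∀ u, 0 ≤ admmGap B₁ B₂ c f₁ f₂ u q) → M (p - q) (p - q) = 0 → p = q := by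
    intro p q hp hq h0
    obtain ⟨p1, p2, p3⟩ := kkt_of_gap_nonneg B₁ B₂ c f₁ f₂ hp
    obtain ⟨q1, q2, q3⟩ := kkt_of_gap_nonneg B₁ B₂ c f₁ f₂ hq
    obtain ⟨d, hd⟩ : ∃ d, d = p - q := ⟨_, rfl⟩
    rw [← hd, hMa] at h0
    have h2 := hT₂' d.2.1
    have h4 := mul_nonneg hσi.le (real_inner_self_nonneg (x := d.2.2 + σ • B₁ d.1))
    have h5 := hT₁' d.1
    have g4 : d.2.2 + σ • B₁ d.1 = 0 :=
      real_inner_self_nonpos.1 (nonpos_of_mul_nonpos_right (by linarith) hσi)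
    have hfe : B₁ d.1 + B₂ d.2.1 = 0 := by
      have : B₁ p.1 + B₂ p.2.1 - (B₁ q.1 + B₂ q.2.1) = 0 := by rw [p3, q3, sub_self]
      rw [← this, hd, Prod.fst_sub, Prod.snd_sub, Prod.fst_sub, map_sub, map_sub]
      abel
    have m1 : ⟪d.2.2, B₁ d.1⟫ ≤ 0 := by
      have a1 := p1 q.1
      have a2 := q1 p.1
      simp only [hd, Prod.fst_sub, Prod.snd_sub, map_sub, inner_sub_left, inner_sub_right]
        at a1 a2 ⊢
      linarith
    have m2 : ⟪d.2.2, B₂ d.2.1⟫ ≤ 0 := by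
      have a1 := p2 q.2.1
      have a2 := q2 p.2.1
      simp only [hd, Prod.fst_sub, Prod.snd_sub, map_sub, inner_sub_left, inner_sub_right]
        at a1 a2 ⊢
      linarith
    have m3 : ⟪d.2.2, B₁ d.1⟫ + ⟪d.2.2, B₂ d.2.1⟫ = 0 := by
      rw [← inner_add_right, hfe, inner_zero_right]
    have hdx : d.2.2 = -(σ • B₁ d.1) := eq_neg_of_add_eq_zero_left g4
    have g6 : B₁ d.1 = 0 := by
      have : ⟪d.2.2, B₁ d.1⟫ = 0 := by linarith
      rw [hdx, inner_neg_left, real_inner_smul_left, neg_eq_zero] at this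
      exact inner_self_eq_zero.1 ((mul_eq_zero.1 this).resolve_left hσ.ne')
    have g7 : d.1 = 0 := eq_zero_of_forms B₁ T₁ hpd₁ g6 (by linarith)
    have g8 : d.2.2 = 0 := by rw [hdx, g6, smul_zero, neg_zero]
    have g9 : B₂ d.2.1 = 0 := by rwa [g6, zero_add] at hfe
    have g10 : d.2.1 = 0 := eq_zero_of_forms B₂ T₂ hpd₂ g9 (by linarith)
    have : d = 0 := Prod.ext g7 (Prod.ext g10 g8)
    rw [hd] at this
    exact sub_eq_zero.1 this
  obtain ⟨p, hp, hlim⟩ := ergodic_tendsto M hsymm hpsd hρ0 hρ2 hw (admmGap B₁ B₂ c f₁ f₂)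
    (admmGap_anti B₁ B₂ c f₁ f₂) (admmGap_concave B₁ B₂ c f₁ f₂ hf₁ hf₂) hstep huniq hbdd
  obtain ⟨k1, k2, k3⟩ := kkt_of_gap_nonneg B₁ B₂ c f₁ f₂ hp
  refine ⟨p.1, p.2.1, p.2.2, fun y' => ?_, fun z' => ?_, k3, ?_, ?_, ?_⟩
  · have := k1 y'
    rw [inner_neg_left, ContinuousLinearMap.adjoint_inner_left]
    linarith
  · have := k2 z'
    rw [inner_neg_left, ContinuousLinearMap.adjoint_inner_left]
    linarith
  · refine ((continuous_fst.tendsto p).comp hlim).congr fun k => ?_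
    simp [ergAvg, hwbdef, Prod.fst_sum]
  · refine (((continuous_fst.comp continuous_snd).tendsto p).comp hlim).congr fun k => ?_
    simp [ergAvg, hwbdef, Prod.fst_sum, Prod.snd_sum]
  · refine (((continuous_snd.comp continuous_snd).tendsto p).comp hlim).congr fun k => ?_
    simp [ergAvg, hwbdef, Prod.snd_sum]
end

section
/- In the pADMM setting, fix k ≥ 0 and define the ergodic averages z̄_a^k := (1/(k+1)) Σ_{t=0}^k z̄^t, z_a^k := (1/(k+1)) Σ_{t=0}^k z^t, x̄_a^k := (1/(k+1)) Σ_{t=0}^k x̄^t, and ε̄_z^k := (1/(k+1)) Σ_{t=0}^k ⟨−B₂* x̄^t − T₂(z̄^t − z^t), z̄^t − z̄_a^k⟩. Then ε̄_z^k ≥ 0 and for every z' ∈ Z, f₂(z') ≥ f₂(z̄_a^k) + ⟨−B₂* x̄_a^k − T₂(z̄_a^k − z_a^k), z' − z̄_a^k⟩ − ε̄_z^k; that is, −B₂* x̄_a^k − T₂(z̄_a^k − z_a^k) is an ε̄_z^k-subgradient of f₂ at z̄_a^k. -/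
open RealInnerProductSpace

/-!
This is the transportation formula for `ε`-subgradients. If `v t` is a subgradient of a convex `f`
at `p t`, averaging the subgradient inequalities with weights `w t` gives
`f z' ≥ ∑ w t * f (p t) + ⟪va, z' - pa⟫ - ε`, where `pa`, `va` are the weighted averages and
`ε = ∑ w t * ⟪v t, p t - pa⟫`. Jensen's inequality replaces the first sum by `f pa`; nonnegativity
of `ε` comes from taking `z' = pa`. For the ergodic averages, linearity of `B₂*` and `T₂` identifies
the average of the subgradients `-B₂* x̄ᵗ - T₂ (z̄ᵗ - zᵗ)` with `-B₂* x̄ₐ - T₂ (z̄ₐ - zₐ)`.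
-/

/-- Transportation formula: a convex combination of subgradients of `f` at the points `p t` is an
`ε`-subgradient at the corresponding combination of the points, with `ε = ∑ w t * ⟪v t, p t - pa⟫`
nonnegative. -/
theorem epsSubgradient_of_convexCombination {ι E : Type*} [NormedAddCommGroup E]
    [InnerProductSpace ℝ E] {f : E → ℝ} (hf : ConvexOn ℝ Set.univ f) (s : Finset ι) (w : ι → ℝ)
    (hw : ∀ t ∈ s, 0 ≤ w t) (hw1 : ∑ t ∈ s, w t = 1) (p v : ι → E)
    (hsub : ∀ t ∈ s, ∀ z', f (p t) + ⟪v t, z' - p t⟫ ≤ f z')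
    (pa : E) (hpa : pa = ∑ t ∈ s, w t • p t) :
    0 ≤ ∑ t ∈ s, w t * ⟪v t, p t - pa⟫ ∧
      ∀ z', f pa + ⟪∑ t ∈ s, w t • v t, z' - pa⟫ - ∑ t ∈ s, w t * ⟪v t, p t - pa⟫ ≤ f z' := by
  have hJ : f pa ≤ ∑ t ∈ s, w t * f (p t) := by
    rw [hpa]
    exact hf.map_sum_le hw hw1 fun _ _ => Set.mem_univ _
  have key : ∀ z', f pa + ⟪∑ t ∈ s, w t • v t, z' - pa⟫
      - ∑ t ∈ s, w t * ⟪v t, p t - pa⟫ ≤ f z' := by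
    intro z'
    have h1 : ∑ t ∈ s, w t * (f (p t) + ⟪v t, z' - p t⟫) ≤ ∑ t ∈ s, w t * f z' :=
      Finset.sum_le_sum fun t ht => mul_le_mul_of_nonneg_left (hsub t ht z') (hw t ht)
    rw [← Finset.sum_mul, hw1, one_mul] at h1
    have h2 : ∑ t ∈ s, w t * (f (p t) + ⟪v t, z' - p t⟫)
        = ∑ t ∈ s, w t * f (p t) + ⟪∑ t ∈ s, w t • v t, z' - pa⟫
          - ∑ t ∈ s, w t * ⟪v t, p t - pa⟫ := by
      rw [sum_inner, ← Finset.sum_add_distrib, ← Finset.sum_sub_distrib]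
      refine Finset.sum_congr rfl fun t _ => ?_
      simp only [real_inner_smul_left, inner_sub_right]
      ring
    linarith
  refine ⟨?_, key⟩
  have h := key pa
  rw [sub_self, inner_zero_right] at h
  linarith

theorem stmt_9 {Y Z X : Type*}
    [NormedAddCommGroup Y] [InnerProductSpace ℝ Y] [FiniteDimensional ℝ Y]
    [NormedAddCommGroup Z] [InnerProductSpace ℝ Z] [FiniteDimensional ℝ Z]
    [NormedAddCommGroup X] [InnerProductSpace ℝ X] [FiniteDimensional ℝ X]
    (B₁ : Y →L[ℝ] X) (B₂ : Z →L[ℝ] X) (c : X)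
    (σ : ℝ) (hσ : 0 < σ) (ρ : ℝ) (hρ0 : 0 < ρ) (hρ2 : ρ ≤ 2)
    (T₁ : Y →L[ℝ] Y) (hT₁sa : ∀ u v : Y, ⟪T₁ u, v⟫ = ⟪u, T₁ v⟫)
    (hT₁psd : ∀ u : Y, 0 ≤ ⟪u, T₁ u⟫)
    (T₂ : Z →L[ℝ] Z) (hT₂sa : ∀ u v : Z, ⟪T₂ u, v⟫ = ⟪u, T₂ v⟫)
    (hT₂psd : ∀ u : Z, 0 ≤ ⟪u, T₂ u⟫)
    (f₁ : Y → ℝ) (hf₁ : ConvexOn ℝ Set.univ f₁)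
    (f₂ : Z → ℝ) (hf₂ : ConvexOn ℝ Set.univ f₂)
    (y : ℕ → Y) (z : ℕ → Z) (x : ℕ → X)
    (yb : ℕ → Y) (zb : ℕ → Z) (xb : ℕ → X)
    (H1 : ∀ k : ℕ, ∀ z' : Z, f₂ z' ≥ f₂ (zb k) +
      ⟪-(ContinuousLinearMap.adjoint B₂ (xb k)) - T₂ (zb k - z k), z' - zb k⟫)
    (H2 : ∀ k : ℕ, xb k = x k + σ • (B₁ (y k) + B₂ (zb k) - c))
    (H3 : ∀ k : ℕ, ∀ y' : Y, f₁ y' ≥ f₁ (yb k) +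
      ⟪-(ContinuousLinearMap.adjoint B₁ (xb k + σ • (B₁ (yb k) + B₂ (zb k) - c)))
        - T₁ (yb k - y k), y' - yb k⟫)
    (H4y : ∀ k : ℕ, y (k + 1) = (1 - ρ) • y k + ρ • yb k)
    (H4z : ∀ k : ℕ, z (k + 1) = (1 - ρ) • z k + ρ • zb k)
    (H4x : ∀ k : ℕ, x (k + 1) = (1 - ρ) • x k + ρ • xb k)
    (k : ℕ) (zba za : Z) (xba : X) (εz : ℝ)
    (hzba : zba = (1 / ((k : ℝ) + 1)) • ∑ t ∈ Finset.range (k + 1), zb t)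
    (hza : za = (1 / ((k : ℝ) + 1)) • ∑ t ∈ Finset.range (k + 1), z t)
    (hxba : xba = (1 / ((k : ℝ) + 1)) • ∑ t ∈ Finset.range (k + 1), xb t)
    (hεz : εz = (1 / ((k : ℝ) + 1)) * ∑ t ∈ Finset.range (k + 1),
      ⟪-(ContinuousLinearMap.adjoint B₂ (xb t)) - T₂ (zb t - z t), zb t - zba⟫) :
    0 ≤ εz ∧ ∀ z' : Z, f₂ z' ≥ f₂ zba +
      ⟪-(ContinuousLinearMap.adjoint B₂ xba) - T₂ (zba - za), z' - zba⟫ - εz := by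
  have hk : (k : ℝ) + 1 ≠ 0 := by positivity
  obtain ⟨h0, h⟩ := epsSubgradient_of_convexCombination hf₂ (Finset.range (k + 1))
    (fun _ => 1 / ((k : ℝ) + 1)) (fun _ _ => by positivity)
    (by simp [hk]) zb (fun t => -(ContinuousLinearMap.adjoint B₂ (xb t)) - T₂ (zb t - z t))
    (fun t _ z' => H1 t z') zba (by rw [hzba, Finset.smul_sum])
  have hv : ∑ t ∈ Finset.range (k + 1), (1 / ((k : ℝ) + 1)) •
      (-(ContinuousLinearMap.adjoint B₂ (xb t)) - T₂ (zb t - z t))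
      = -(ContinuousLinearMap.adjoint B₂ xba) - T₂ (zba - za) := by
    rw [hzba, hza, hxba, ← Finset.smul_sum]
    simp only [map_smul, map_sum, map_sub, Finset.sum_sub_distrib, Finset.sum_neg_distrib,
      smul_sub, smul_neg]
  rw [← Finset.mul_sum, ← hεz] at h0
  rw [hv, ← Finset.mul_sum, ← hεz] at h
  exact ⟨h0, h⟩
end

section
/- In the pADMM setting, fix k ≥ 0 and define the ergodic averages ȳ_a^k := (1/(k+1)) Σ_{t=0}^k ȳ^t, y_a^k := (1/(k+1)) Σ_{t=0}^k y^t, z̄_a^k := (1/(k+1)) Σ_{t=0}^k z̄^t, x̄_a^k := (1/(k+1)) Σ_{t=0}^k x̄^t, and ε̄_y^k := (1/(k+1)) Σ_{t=0}^k ⟨−B₁*(x̄^t + σ(B₁ ȳ^t + B₂ z̄^t − c)) − T₁(ȳ^t − y^t), ȳ^t − ȳ_a^k⟩. Then ε̄_y^k ≥ 0 and for every y' ∈ Y, f₁(y') ≥ f₁(ȳ_a^k) + ⟨−B₁*(x̄_a^k + σ(B₁ ȳ_a^k + B₂ z̄_a^k − c)) − T₁(ȳ_a^k − y_a^k), y'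 − ȳ_a^k⟩ − ε̄_y^k; that is, −B₁*(x̄_a^k + σ(B₁ ȳ_a^k + B₂ z̄_a^k − c)) − T₁(ȳ_a^k − y_a^k) is an ε̄_y^k-subgradient of f₁ at ȳ_a^k. -/
/-!
The claim is the transportation formula for subgradients. If `v t` is a subgradient of a convex
`f` at `p t` for each `t ∈ s`, then averaging the subgradient inequalities and splitting
`y' - p t = (y' - pa) - (p t - pa)`, with `pa` the mean of the `p t`, gives
`f y' ≥ mean (f (p t)) + ⟪mean v, y' - pa⟫ - ε`, where `ε = mean ⟪v t, p t - pa⟫`.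
Jensen's inequality `mean (f (p t)) ≥ f pa` turns this into the `ε`-subgradient inequality, whose
instance `y' = pa` is `ε ≥ 0`. For the algorithm, the vectors `v t` depend affinely on the
iterates, so their mean is the same expression evaluated at the averaged iterates.
-/

open RealInnerProductSpace

/-- Transportation formula: the weighted mean of subgradients of `f` at the points `p t` is an
`ε`-subgradient of `f` at the weighted mean of the `p t`, with
`ε = ∑ w t * ⟪v t, p t - ∑ w i • p i⟫ ≥ 0`. -/
theorem subgradient_transport {ι E : Type*} [NormedAddCommGroup E] [InnerProductSpace ℝ E]
    {f : E → ℝ} (hf : ConvexOn ℝ Set.univ f) (s : Finset ι) (w : ι → ℝ) (p v : ι → E)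
    (hw : ∀ t ∈ s, 0 ≤ w t) (hw1 : ∑ t ∈ s, w t = 1)
    (hv : ∀ t ∈ s, ∀ y' : E, f (p t) + ⟪v t, y' - p t⟫ ≤ f y')
    (pa : E) (hpa : pa = ∑ t ∈ s, w t • p t) :
    0 ≤ ∑ t ∈ s, w t * ⟪v t, p t - pa⟫ ∧
      ∀ y' : E, f pa + ⟪∑ t ∈ s, w t • v t, y' - pa⟫ - ∑ t ∈ s, w t * ⟪v t, p t - pa⟫ ≤ f y' := by
  have jensen : f pa ≤ ∑ t ∈ s, w t * f (p t) := by
    rw [hpa]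
    simpa using hf.map_sum_le hw hw1 (fun t _ => Set.mem_univ (p t))
  have key : ∀ y' : E, f pa + ⟪∑ t ∈ s, w t • v t, y' - pa⟫
      - ∑ t ∈ s, w t * ⟪v t, p t - pa⟫ ≤ f y' := by
    intro y'
    have h1 : ∑ t ∈ s, w t * (f (p t) + ⟪v t, y' - p t⟫) ≤ ∑ t ∈ s, w t * f y' :=
      Finset.sum_le_sum fun t ht => mul_le_mul_of_nonneg_left (hv t ht y') (hw t ht)
    rw [← Finset.sum_mul, hw1, one_mul] at h1
    have h2 : ∑ t ∈ s, w t * (f (p t) + ⟪v t, y' - p t⟫) = ∑ t ∈ s, w t * f (p t)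
        + ⟪∑ t ∈ s, w t • v t, y' - pa⟫ - ∑ t ∈ s, w t * ⟪v t, p t - pa⟫ := by
      rw [sum_inner, ← Finset.sum_add_distrib, ← Finset.sum_sub_distrib]
      refine Finset.sum_congr rfl fun t _ => ?_
      rw [real_inner_smul_left, ← sub_sub_sub_cancel_right y' (p t) pa, inner_sub_right]
      ring
    linarith
  refine ⟨?_, key⟩
  have h := key pa
  rw [sub_self, inner_zero_right] at h
  linarith

theorem stmt_10 {Y Z X : Type*}
    [NormedAddCommGroup Y] [InnerProductSpace ℝ Y] [FiniteDimensional ℝ Y]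
    [NormedAddCommGroup Z] [InnerProductSpace ℝ Z] [FiniteDimensional ℝ Z]
    [NormedAddCommGroup X] [InnerProductSpace ℝ X] [FiniteDimensional ℝ X]
    (B₁ : Y →L[ℝ] X) (B₂ : Z →L[ℝ] X) (c : X)
    (σ : ℝ) (hσ : 0 < σ) (ρ : ℝ) (hρ0 : 0 < ρ) (hρ2 : ρ ≤ 2)
    (T₁ : Y →L[ℝ] Y) (hT₁sa : ∀ u v : Y, ⟪T₁ u, v⟫ = ⟪u, T₁ v⟫)
    (hT₁psd : ∀ u : Y, 0 ≤ ⟪u, T₁ u⟫)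
    (T₂ : Z →L[ℝ] Z) (hT₂sa : ∀ u v : Z, ⟪T₂ u, v⟫ = ⟪u, T₂ v⟫)
    (hT₂psd : ∀ u : Z, 0 ≤ ⟪u, T₂ u⟫)
    (f₁ : Y → ℝ) (hf₁ : ConvexOn ℝ Set.univ f₁)
    (f₂ : Z → ℝ) (hf₂ : ConvexOn ℝ Set.univ f₂)
    (y : ℕ → Y) (z : ℕ → Z) (x : ℕ → X)
    (yb : ℕ → Y) (zb : ℕ → Z) (xb : ℕ → X)
    (H1 : ∀ k : ℕ, ∀ z' : Z, f₂ z' ≥ f₂ (zb k) +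
      ⟪-(ContinuousLinearMap.adjoint B₂ (xb k)) - T₂ (zb k - z k), z' - zb k⟫)
    (H2 : ∀ k : ℕ, xb k = x k + σ • (B₁ (y k) + B₂ (zb k) - c))
    (H3 : ∀ k : ℕ, ∀ y' : Y, f₁ y' ≥ f₁ (yb k) +
      ⟪-(ContinuousLinearMap.adjoint B₁ (xb k + σ • (B₁ (yb k) + B₂ (zb k) - c)))
        - T₁ (yb k - y k), y' - yb k⟫)
    (H4y : ∀ k : ℕ, y (k + 1) = (1 - ρ) • y k + ρ • yb k)
    (H4z : ∀ k : ℕ, z (k + 1) = (1 - ρ) • z k + ρ • zb k)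
    (H4x : ∀ k : ℕ, x (k + 1) = (1 - ρ) • x k + ρ • xb k)
    (k : ℕ) (yba ya : Y) (zba : Z) (xba : X) (εy : ℝ)
    (hyba : yba = (1 / ((k : ℝ) + 1)) • ∑ t ∈ Finset.range (k + 1), yb t)
    (hya : ya = (1 / ((k : ℝ) + 1)) • ∑ t ∈ Finset.range (k + 1), y t)
    (hzba : zba = (1 / ((k : ℝ) + 1)) • ∑ t ∈ Finset.range (k + 1), zb t)
    (hxba : xba = (1 / ((k : ℝ) + 1)) • ∑ t ∈ Finset.range (k + 1), xb t)
    (hεy : εy = (1 / ((k : ℝ) + 1)) * ∑ t ∈ Finset.range (k + 1),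
      ⟪-(ContinuousLinearMap.adjoint B₁ (xb t + σ • (B₁ (yb t) + B₂ (zb t) - c)))
        - T₁ (yb t - y t), yb t - yba⟫) :
    0 ≤ εy ∧ ∀ y' : Y, f₁ y' ≥ f₁ yba +
      ⟪-(ContinuousLinearMap.adjoint B₁ (xba + σ • (B₁ yba + B₂ zba - c)))
        - T₁ (yba - ya), y' - yba⟫ - εy := by
  have hk : (k : ℝ) + 1 ≠ 0 := by positivity
  have hw1 : ∑ _t ∈ Finset.range (k + 1), 1 / ((k : ℝ) + 1) = 1 := by
    rw [Finset.sum_const, Finset.card_range, nsmul_eq_mul]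
    push_cast
    field_simp
  have main := subgradient_transport hf₁ (Finset.range (k + 1)) (fun _ => 1 / ((k : ℝ) + 1)) yb
    (fun t => -(ContinuousLinearMap.adjoint B₁ (xb t + σ • (B₁ (yb t) + B₂ (zb t) - c)))
        - T₁ (yb t - y t)) (fun t _ => by positivity) hw1 (fun t _ y' => H3 t y') yba
    (by rw [hyba, Finset.smul_sum])
  -- The weights sum to one, so the constant `c` is its own mean.
  have hc : c = ∑ _t ∈ Finset.range (k + 1), (1 / ((k : ℝ) + 1)) • c := by
    rw [← Finset.sum_smul, hw1, one_smul]
  have hmean : ∑ t ∈ Finset.range (k + 1), (1 / ((k : ℝ) + 1)) •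
      (-(ContinuousLinearMap.adjoint B₁ (xb t + σ • (B₁ (yb t) + B₂ (zb t) - c)))
        - T₁ (yb t - y t)) =
      -(ContinuousLinearMap.adjoint B₁ (xba + σ • (B₁ yba + B₂ zba - c))) - T₁ (yba - ya) := by
    have e1 : xba + σ • (B₁ yba + B₂ zba - c) = ∑ t ∈ Finset.range (k + 1),
        (1 / ((k : ℝ) + 1)) • (xb t + σ • (B₁ (yb t) + B₂ (zb t) - c)) := by
      conv_lhs => rw [hc]
      simp only [hxba, hyba, hzba, map_smul, map_sum, Finset.smul_sum, ← Finset.sum_add_distrib,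
        ← Finset.sum_sub_distrib]
      refine Finset.sum_congr rfl fun t _ => ?_
      module
    have e2 : yba - ya = ∑ t ∈ Finset.range (k + 1), (1 / ((k : ℝ) + 1)) • (yb t - y t) := by
      rw [hyba, hya, ← smul_sub, ← Finset.sum_sub_distrib, Finset.smul_sum]
    rw [e1, e2, map_sum, map_sum, ← Finset.sum_neg_distrib, ← Finset.sum_sub_distrib]
    refine Finset.sum_congr rfl fun t _ => ?_
    rw [map_smul, map_smul, smul_sub, smul_neg]
  rw [hmean, ← Finset.mul_sum, ← hεy] at main
  exact main
end

section
/- In the pADMM setting, assume a KKT point (y*, z*, x*) exists, and set R₀ := sqrt( ⟨y⁰ − y*, T₁(y⁰ − y*)⟩ + ⟨z⁰ − z*, T₂(z⁰ − z*)⟩ + σ⁻¹ ‖(x⁰ − x*) + σ B₁(y⁰ − y*)‖² ). Then for every k ≥ 0, the ergodic averages ȳ_a^k := (1/(k+1)) Σ_{t=0}^k ȳ^t and z̄_a^k := (1/(k+1)) Σ_{t=0}^k z̄^t satisfy the feasibility bound ‖B₁ ȳ_a^k + B₂ z̄_a^k − c‖ ≤ 2 R₀ / (sqrt(σ) ρ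 (k+1)). -/
/-!
The iteration is a relaxed proximal point method in a degenerate metric. Write `s = (x - x*) + σ B₁ (y - y*)`
and let `r̄ = B₁ ȳ + B₂ z̄ - c` be the residual. The corresponding value at the barred point is `s + σ r̄`.
Adding the optimality conditions of the two subproblems to the KKT inequalities makes the mixed terms collapse to
`⟪T₁ (ȳ - y), ȳ - y*⟫ + ⟪T₂ (z̄ - z), z̄ - z*⟫ + ⟪s + σ r̄, r̄⟫ ≤ 0` (`padmm_key`).
This says that the displacement towards the barred point has nonpositive product with the barred error,
so, because `0 < ρ ≤ 2`, relaxation does not increase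
`⟪y - y*, T₁ (y - y*)⟫ + ⟪z - z*, T₂ (z - z*)⟫ + σ⁻¹ ‖s‖²` (`relax_quad`).
Hence `‖s‖ ≤ √σ R₀` along the whole sequence. Since `s` moves by exactly `ρ σ r̄` at each step, the sum of the
residuals telescopes to `(s_{k+1} - s_0) / (ρ σ)`, which has norm at most `2 R₀ / (ρ √σ)`.
-/

open RealInnerProductSpace

/-- Relaxation estimate for a positive semidefinite form. The exact difference of the two sides is
`ρ (2 - ρ) ⟪b - a, T (b - a)⟫`. -/
lemma relax_quad {E : Type*} [NormedAddCommGroup E] [InnerProductSpace ℝ E]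
    (T : E →L[ℝ] E) (hsa : ∀ u v : E, ⟪T u, v⟫ = ⟪u, T v⟫) (hpsd : ∀ u : E, 0 ≤ ⟪u, T u⟫)
    {ρ : ℝ} (hρ0 : 0 < ρ) (hρ2 : ρ ≤ 2) (a b : E) :
    ⟪a + ρ • (b - a), T (a + ρ • (b - a))⟫ ≤ ⟪a, T a⟫ + 2 * ρ * ⟪T (b - a), b⟫ := by
  have h := mul_nonneg (mul_nonneg hρ0.le (sub_nonneg.2 hρ2)) (hpsd (b - a))
  have hs : ⟪b, T a⟫ = ⟪a, T b⟫ := by rw [← hsa, real_inner_comm]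
  simp only [map_add, map_sub, map_smul, inner_add_left, inner_add_right, inner_sub_left,
    inner_sub_right, real_inner_smul_left, real_inner_smul_right, hsa, hs] at h ⊢
  linarith

/-- Monotonicity inequality of one step: the two subproblem optimality conditions tested at the KKT point,
plus the KKT inequalities tested at the barred point. -/
lemma padmm_key {Y Z X : Type*}
    [NormedAddCommGroup Y] [InnerProductSpace ℝ Y] [FiniteDimensional ℝ Y]
    [NormedAddCommGroup Z] [InnerProductSpace ℝ Z] [FiniteDimensional ℝ Z]
    [NormedAddCommGroup X] [InnerProductSpace ℝ X] [FiniteDimensional ℝ X]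
    (B₁ : Y →L[ℝ] X) (B₂ : Z →L[ℝ] X) (c : X) (σ : ℝ)
    (T₁ : Y →L[ℝ] Y) (T₂ : Z →L[ℝ] Z) (f₁ : Y → ℝ) (f₂ : Z → ℝ)
    (y yb ystar : Y) (z zb zstar : Z) (x xb xstar : X)
    (H1 : f₂ zstar ≥ f₂ zb +
      ⟪-(ContinuousLinearMap.adjoint B₂ xb) - T₂ (zb - z), zstar - zb⟫)
    (H2 : xb = x + σ • (B₁ y + B₂ zb - c))
    (H3 : f₁ ystar ≥ f₁ yb +
      ⟪-(ContinuousLinearMap.adjoint B₁ (xb + σ • (B₁ yb + B₂ zb - c)))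
        - T₁ (yb - y), ystar - yb⟫)
    (hK1 : f₁ yb ≥ f₁ ystar + ⟪-(ContinuousLinearMap.adjoint B₁ xstar), yb - ystar⟫)
    (hK2 : f₂ zb ≥ f₂ zstar + ⟪-(ContinuousLinearMap.adjoint B₂ xstar), zb - zstar⟫)
    (hK3 : B₁ ystar + B₂ zstar = c) :
    ⟪T₁ (yb - y), yb - ystar⟫ + ⟪T₂ (zb - z), zb - zstar⟫
      + ⟪(x - xstar) + σ • B₁ (y - ystar) + σ • (B₁ yb + B₂ zb - c), B₁ yb + B₂ zb - c⟫ ≤ 0 := by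
  rw [← neg_sub yb ystar] at H3
  rw [← neg_sub zb zstar] at H1
  have hr : B₁ yb + B₂ zb - c = B₁ (yb - ystar) + B₂ (zb - zstar) := by
    rw [← hK3, map_sub, map_sub]; abel
  have hx : xb - xstar + σ • B₁ (yb - ystar)
      = (x - xstar) + σ • B₁ (y - ystar) + σ • (B₁ yb + B₂ zb - c) := by
    rw [H2]; simp only [map_sub]; module
  rw [← hx]
  rw [hr] at H3 ⊢
  simp only [inner_neg_right, inner_sub_left, inner_neg_left,
    ContinuousLinearMap.adjoint_inner_left] at H1 H3 hK1 hK2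
  generalize yb - ystar = u at *
  generalize zb - zstar = v at *
  simp only [inner_add_left, inner_add_right, inner_sub_left, real_inner_smul_left] at *
  rw [real_inner_comm (B₁ u) (B₂ v)] at H3
  linarith

theorem stmt_12 {Y Z X : Type*}
    [NormedAddCommGroup Y] [InnerProductSpace ℝ Y] [FiniteDimensional ℝ Y]
    [NormedAddCommGroup Z] [InnerProductSpace ℝ Z] [FiniteDimensional ℝ Z]
    [NormedAddCommGroup X] [InnerProductSpace ℝ X] [FiniteDimensional ℝ X]
    (B₁ : Y →L[ℝ] X) (B₂ : Z →L[ℝ] X) (c : X)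
    (σ : ℝ) (hσ : 0 < σ) (ρ : ℝ) (hρ0 : 0 < ρ) (hρ2 : ρ ≤ 2)
    (T₁ : Y →L[ℝ] Y) (hT₁sa : ∀ u v : Y, ⟪T₁ u, v⟫ = ⟪u, T₁ v⟫)
    (hT₁psd : ∀ u : Y, 0 ≤ ⟪u, T₁ u⟫)
    (T₂ : Z →L[ℝ] Z) (hT₂sa : ∀ u v : Z, ⟪T₂ u, v⟫ = ⟪u, T₂ v⟫)
    (hT₂psd : ∀ u : Z, 0 ≤ ⟪u, T₂ u⟫)
    (f₁ : Y → ℝ) (hf₁ : ConvexOn ℝ Set.univ f₁)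
    (f₂ : Z → ℝ) (hf₂ : ConvexOn ℝ Set.univ f₂)
    (y : ℕ → Y) (z : ℕ → Z) (x : ℕ → X)
    (yb : ℕ → Y) (zb : ℕ → Z) (xb : ℕ → X)
    (H1 : ∀ k : ℕ, ∀ z' : Z, f₂ z' ≥ f₂ (zb k) +
      ⟪-(ContinuousLinearMap.adjoint B₂ (xb k)) - T₂ (zb k - z k), z' - zb k⟫)
    (H2 : ∀ k : ℕ, xb k = x k + σ • (B₁ (y k) + B₂ (zb k) - c))
    (H3 : ∀ k : ℕ, ∀ y' : Y, f₁ y' ≥ f₁ (yb k) +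
      ⟪-(ContinuousLinearMap.adjoint B₁ (xb k + σ • (B₁ (yb k) + B₂ (zb k) - c)))
        - T₁ (yb k - y k), y' - yb k⟫)
    (H4y : ∀ k : ℕ, y (k + 1) = (1 - ρ) • y k + ρ • yb k)
    (H4z : ∀ k : ℕ, z (k + 1) = (1 - ρ) • z k + ρ • zb k)
    (H4x : ∀ k : ℕ, x (k + 1) = (1 - ρ) • x k + ρ • xb k)
    (ystar : Y) (zstar : Z) (xstar : X)
    (hK1 : ∀ y' : Y, f₁ y' ≥ f₁ ystar + ⟪-(ContinuousLinearMap.adjoint B₁ xstar), y' - ystar⟫)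
    (hK2 : ∀ z' : Z, f₂ z' ≥ f₂ zstar + ⟪-(ContinuousLinearMap.adjoint B₂ xstar), z' - zstar⟫)
    (hK3 : B₁ ystar + B₂ zstar = c)
    (R₀ : ℝ)
    (hR₀ : R₀ = Real.sqrt (⟪y 0 - ystar, T₁ (y 0 - ystar)⟫ + ⟪z 0 - zstar, T₂ (z 0 - zstar)⟫
      + σ⁻¹ * ‖(x 0 - xstar) + σ • B₁ (y 0 - ystar)‖ ^ 2)) :
    ∀ k : ℕ, ∀ yba : Y, ∀ zba : Z,
      yba = (1 / ((k : ℝ) + 1)) • ∑ t ∈ Finset.range (k + 1), yb t →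
      zba = (1 / ((k : ℝ) + 1)) • ∑ t ∈ Finset.range (k + 1), zb t →
      ‖B₁ yba + B₂ zba - c‖ ≤ 2 * R₀ / (Real.sqrt σ * ρ * ((k : ℝ) + 1)) := by
  set s : ℕ → X := fun k => (x k - xstar) + σ • B₁ (y k - ystar) with hs
  set r : ℕ → X := fun k => B₁ (yb k) + B₂ (zb k) - c with hr
  set Φ : ℕ → ℝ := fun k => ⟪y k - ystar, T₁ (y k - ystar)⟫ + ⟪z k - zstar, T₂ (z k - zstar)⟫
      + σ⁻¹ * ‖s k‖ ^ 2 with hΦ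
  have hstep : ∀ k, s (k + 1) = s k + (ρ * σ) • r k := by
    intro k
    simp only [hs, hr, H4x, H4y, H2, map_sub, map_add, map_smul]
    module
  have hdec : ∀ k, Φ (k + 1) ≤ Φ k := by
    intro k
    have hkey := padmm_key B₁ B₂ c σ T₁ T₂ f₁ f₂ (y k) (yb k) ystar (z k) (zb k) zstar
      (x k) (xb k) xstar (H1 k zstar) (H2 k) (H3 k ystar) (hK1 _) (hK2 _) hK3
    change _ + _ + ⟪s k + σ • r k, r k⟫ ≤ 0 at hkey
    have h1 := relax_quad T₁ hT₁sa hT₁psd hρ0 hρ2 (y k - ystar) (yb k - ystar)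
    have h2 := relax_quad T₂ hT₂sa hT₂psd hρ0 hρ2 (z k - zstar) (zb k - zstar)
    have h3 := relax_quad (ContinuousLinearMap.id ℝ X) (fun _ _ => rfl)
      (fun u => real_inner_self_nonneg) hρ0 hρ2 (s k) (s k + σ • r k)
    have e1 : y (k + 1) - ystar
        = (y k - ystar) + ρ • ((yb k - ystar) - (y k - ystar)) := by rw [H4y]; module
    have e2 : z (k + 1) - zstar
        = (z k - zstar) + ρ • ((zb k - zstar) - (z k - zstar)) := by rw [H4z]; module
    have e3 : s (k + 1) = s k + ρ • ((s k + σ • r k) - s k) := by rw [hstep]; module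
    rw [← e1, sub_sub_sub_cancel_right] at h1
    rw [← e2, sub_sub_sub_cancel_right] at h2
    rw [← e3, add_sub_cancel_left] at h3
    simp only [ContinuousLinearMap.id_apply, real_inner_self_eq_norm_sq,
      real_inner_smul_left, real_inner_comm (s k + σ • r k) (r k)] at h3
    have h3' : σ⁻¹ * ‖s (k + 1)‖ ^ 2
        ≤ σ⁻¹ * ‖s k‖ ^ 2 + 2 * ρ * ⟪s k + σ • r k, r k⟫ := by
      have := mul_le_mul_of_nonneg_left h3 (inv_nonneg.2 hσ.le)
      calc _ ≤ _ := this
        _ = _ := by field_simp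
    have := mul_nonpos_of_nonneg_of_nonpos (by positivity : 0 ≤ 2 * ρ) hkey
    simp only [hΦ]
    linarith
  have hΦ0 : ∀ k, Φ k ≤ Φ 0 := fun k => antitone_nat_of_succ_le hdec (Nat.zero_le k)
  have hsk : ∀ k, ‖s k‖ ≤ Real.sqrt σ * R₀ := by
    intro k
    have hR : R₀ = Real.sqrt (Φ 0) := hR₀
    rw [hR, ← Real.sqrt_mul hσ.le]
    apply Real.le_sqrt_of_sq_le
    have h1 : σ⁻¹ * ‖s k‖ ^ 2 ≤ Φ 0 := by
      have := hΦ0 k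
      have a := hT₁psd (y k - ystar)
      have b := hT₂psd (z k - zstar)
      simp only [hΦ] at this ⊢
      linarith
    rwa [inv_mul_le_iff₀ hσ] at h1
  have htel : ∀ n, s n = s 0 + (ρ * σ) • ∑ t ∈ Finset.range n, r t := by
    intro n
    induction n with
    | zero => simp
    | succ n ih => rw [hstep, ih, Finset.sum_range_succ]; module
  intro k yba zba hy hz
  have hk : (0 : ℝ) < (k : ℝ) + 1 := by positivity
  have havg : ((k : ℝ) + 1) • (B₁ yba + B₂ zba - c) = ∑ t ∈ Finset.range (k + 1), r t := by
    simp only [hr, hy, hz, Finset.sum_sub_distrib, Finset.sum_add_distrib, map_smul, map_sum,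
      Finset.sum_const, Finset.card_range, smul_sub, smul_add, smul_smul,
      mul_one_div_cancel hk.ne', one_smul]
    rw [← Nat.cast_smul_eq_nsmul ℝ]
    push_cast
    rfl
  have hfin : (ρ * σ * ((k : ℝ) + 1)) • (B₁ yba + B₂ zba - c) = s (k + 1) - s 0 := by
    rw [mul_smul, havg, htel (k + 1)]; abel
  have hn : ρ * σ * ((k : ℝ) + 1) * ‖B₁ yba + B₂ zba - c‖ ≤ 2 * (Real.sqrt σ * R₀) := by
    have h := congrArg norm hfin
    rw [norm_smul, Real.norm_of_nonneg (by positivity)] at h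
    rw [h]
    have := norm_sub_le (s (k + 1)) (s 0)
    linarith [hsk (k + 1), hsk 0]
  have hq : 0 < Real.sqrt σ := Real.sqrt_pos.2 hσ
  rw [le_div_iff₀ (by positivity)]
  refine le_of_mul_le_mul_left ?_ hq
  calc _ = ρ * (Real.sqrt σ * Real.sqrt σ) * ((k : ℝ) + 1) * ‖B₁ yba + B₂ zba - c‖ := by ring
    _ ≤ _ := by rw [Real.mul_self_sqrt hσ.le]; linarith
end

section
/- In the pADMM setting, assume a KKT point (y*, z*, x*) exists, and set R₀ := sqrt( ⟨y⁰ − y*, T₁(y⁰ − y*)⟩ + ⟨z⁰ − z*, T₂(z⁰ − z*)⟩ + σ⁻¹ ‖(x⁰ − x*) + σ B₁(y⁰ − y*)‖² ). Then for every k ≥ 0, with z̄_a^k, z_a^k, x̄_a^k the ergodic averages of z̄^t, z^t, x̄^t over t = 0, …, k and ε̄_z^k := (1/(k+1)) Σ_{t=0}^k ⟨−B₂* x̄^t − T₂(z̄^t − z^t), z̄^t − z̄_a^k⟩, there exists a vector v ∈ Z that is an ε̄_z^k-subgradient of f₂ at z̄_a^k (i.e. f₂(z') ≥ f₂(z̄_a^k)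 + ⟨v, z' − z̄_a^k⟩ − ε̄_z^k for all z') and satisfies ‖v + B₂* x̄_a^k‖ ≤ sqrt(‖T₂‖) · 2 R₀ / (ρ(k+1)), where ‖T₂‖ is the operator norm of T₂. -/
/-!
Write `w = (y, z, x)` and let `M` be the symmetric positive semidefinite bilinear form with
`M(w, w) = Q(w) = ⟪y, T₁ y⟫ + ⟪z, T₂ z⟫ + σ⁻¹ ‖x + σ B₁ y‖²`.  The iteration is a relaxed step, in
the (semi)metric `Q`, of proximal type, for the monotone KKT operator: adding the subgradient inequalities of the step
and of the KKT point gives `M(w^t - w̄^t, w̄^t - w*) ≥ 0`, and for `0 < ρ ≤ 2` this makes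
`Q(w^t - w*)` nonincreasing (`relax_identity`).  Hence `⟪z^t - z*, T₂ (z^t - z*)⟫ ≤ R₀²`.

The vector `v` is the average of the exact subgradients `-B₂* x̄^t - T₂ (z̄^t - z^t)`; by Jensen it is
an `ε̄_z`-subgradient at the averaged point.  Since `ρ (z̄^t - z^t) = z^{t+1} - z^t`, the sum
telescopes and `v + B₂* x̄_a = -T₂ (z^{k+1} - z^0) / (ρ (k+1))`.  The bound follows from
`‖T u‖² ≤ ‖T‖ ⟪u, T u⟫` (`norm_sq_le_of_psd`) and the parallelogram inequality.
-/

open RealInnerProductSpace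

/-- Cauchy–Schwarz for the semi-inner product `⟪·, T ·⟫`, applied to the pair `u`, `T u`. -/
lemma norm_sq_le_of_psd {E : Type*} [NormedAddCommGroup E] [InnerProductSpace ℝ E]
    (T : E →L[ℝ] E) (hsa : ∀ u v : E, ⟪T u, v⟫ = ⟪u, T v⟫) (hpsd : ∀ u : E, 0 ≤ ⟪u, T u⟫) (u : E) :
    ‖T u‖ ^ 2 ≤ ‖T‖ * ⟪u, T u⟫ := by
  have hq : ∀ s : ℝ, 0 ≤ ⟪T u, T (T u)⟫ * (s * s) + (2 * ‖T u‖ ^ 2) * s + ⟪u, T u⟫ := by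
    intro s
    have h := hpsd (u + s • T u)
    have h1 : ⟪u, T (T u)⟫ = ‖T u‖ ^ 2 := by rw [← hsa, real_inner_self_eq_norm_sq]
    simp only [map_add, map_smul, inner_add_left, inner_add_right, real_inner_smul_left,
      real_inner_smul_right, h1, real_inner_self_eq_norm_sq] at h
    linarith
  have hd := discrim_le_zero hq
  unfold discrim at hd
  have hb : ⟪T u, T (T u)⟫ ≤ ‖T‖ * ‖T u‖ ^ 2 := by
    have h1 := real_inner_le_norm (T u) (T (T u))
    have h2 := T.le_opNorm (T u)
    nlinarith [norm_nonneg (T u)]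
  have hu := hpsd u
  rcases (sq_nonneg ‖T u‖).eq_or_lt with h0 | h0
  · rw [← h0]; positivity
  · refine le_of_mul_le_mul_left ?_ h0
    nlinarith [mul_le_mul_of_nonneg_right hb hu]

/-- Expansion of a symmetric quadratic form along a relaxed step: `b` is the distance of the
proximal point from the solution and `d` the proximal displacement. -/
lemma relax_identity {E : Type*} [NormedAddCommGroup E] [InnerProductSpace ℝ E]
    (T : E →L[ℝ] E) (hsa : ∀ u v : E, ⟪T u, v⟫ = ⟪u, T v⟫) (ρ : ℝ) (b d : E) :
    ⟪b + (1 - ρ) • d, T (b + (1 - ρ) • d)⟫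
      = ⟪b + d, T (b + d)⟫ - 2 * ρ * ⟪T d, b⟫ - ρ * (2 - ρ) * ⟪d, T d⟫ := by
  have h1 : ⟪b, T d⟫ = ⟪T d, b⟫ := real_inner_comm _ _
  have h2 : ⟪d, T b⟫ = ⟪T d, b⟫ := (hsa d b).symm
  simp only [map_add, map_smul, inner_add_left, inner_add_right, real_inner_smul_left,
    real_inner_smul_right, h1, h2]
  ring

lemma psd_sub_le {E : Type*} [NormedAddCommGroup E] [InnerProductSpace ℝ E]
    (T : E →L[ℝ] E) (hpsd : ∀ u : E, 0 ≤ ⟪u, T u⟫) (a b : E) :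
    ⟪a - b, T (a - b)⟫ ≤ 2 * ⟪a, T a⟫ + 2 * ⟪b, T b⟫ := by
  have h := hpsd (a + b)
  simp only [map_add, map_sub, inner_add_left, inner_add_right, inner_sub_left,
    inner_sub_right] at h ⊢
  linarith

theorem stmt_13 {Y Z X : Type*}
    [NormedAddCommGroup Y] [InnerProductSpace ℝ Y] [FiniteDimensional ℝ Y]
    [NormedAddCommGroup Z] [InnerProductSpace ℝ Z] [FiniteDimensional ℝ Z]
    [NormedAddCommGroup X] [InnerProductSpace ℝ X] [FiniteDimensional ℝ X]
    (B₁ : Y →L[ℝ] X) (B₂ : Z →L[ℝ] X) (c : X)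
    (σ : ℝ) (hσ : 0 < σ) (ρ : ℝ) (hρ0 : 0 < ρ) (hρ2 : ρ ≤ 2)
    (T₁ : Y →L[ℝ] Y) (hT₁sa : ∀ u v : Y, ⟪T₁ u, v⟫ = ⟪u, T₁ v⟫)
    (hT₁psd : ∀ u : Y, 0 ≤ ⟪u, T₁ u⟫)
    (T₂ : Z →L[ℝ] Z) (hT₂sa : ∀ u v : Z, ⟪T₂ u, v⟫ = ⟪u, T₂ v⟫)
    (hT₂psd : ∀ u : Z, 0 ≤ ⟪u, T₂ u⟫)
    (f₁ : Y → ℝ) (hf₁ : ConvexOn ℝ Set.univ f₁)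
    (f₂ : Z → ℝ) (hf₂ : ConvexOn ℝ Set.univ f₂)
    (y : ℕ → Y) (z : ℕ → Z) (x : ℕ → X)
    (yb : ℕ → Y) (zb : ℕ → Z) (xb : ℕ → X)
    (H1 : ∀ k : ℕ, ∀ z' : Z, f₂ z' ≥ f₂ (zb k) +
      ⟪-(ContinuousLinearMap.adjoint B₂ (xb k)) - T₂ (zb k - z k), z' - zb k⟫)
    (H2 : ∀ k : ℕ, xb k = x k + σ • (B₁ (y k) + B₂ (zb k) - c))
    (H3 : ∀ k : ℕ, ∀ y' : Y, f₁ y' ≥ f₁ (yb k) +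
      ⟪-(ContinuousLinearMap.adjoint B₁ (xb k + σ • (B₁ (yb k) + B₂ (zb k) - c)))
        - T₁ (yb k - y k), y' - yb k⟫)
    (H4y : ∀ k : ℕ, y (k + 1) = (1 - ρ) • y k + ρ • yb k)
    (H4z : ∀ k : ℕ, z (k + 1) = (1 - ρ) • z k + ρ • zb k)
    (H4x : ∀ k : ℕ, x (k + 1) = (1 - ρ) • x k + ρ • xb k)
    (ystar : Y) (zstar : Z) (xstar : X)
    (hK1 : ∀ y' : Y, f₁ y' ≥ f₁ ystar + ⟪-(ContinuousLinearMap.adjoint B₁ xstar), y' - ystar⟫)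
    (hK2 : ∀ z' : Z, f₂ z' ≥ f₂ zstar + ⟪-(ContinuousLinearMap.adjoint B₂ xstar), z' - zstar⟫)
    (hK3 : B₁ ystar + B₂ zstar = c)
    (R₀ : ℝ)
    (hR₀ : R₀ = Real.sqrt (⟪y 0 - ystar, T₁ (y 0 - ystar)⟫ + ⟪z 0 - zstar, T₂ (z 0 - zstar)⟫
      + σ⁻¹ * ‖(x 0 - xstar) + σ • B₁ (y 0 - ystar)‖ ^ 2)) :
    ∀ k : ℕ, ∀ zba za : Z, ∀ xba : X, ∀ εz : ℝ,
      zba = (1 / ((k : ℝ) + 1)) • ∑ t ∈ Finset.range (k + 1), zb t →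
      za = (1 / ((k : ℝ) + 1)) • ∑ t ∈ Finset.range (k + 1), z t →
      xba = (1 / ((k : ℝ) + 1)) • ∑ t ∈ Finset.range (k + 1), xb t →
      εz = (1 / ((k : ℝ) + 1)) * ∑ t ∈ Finset.range (k + 1),
        ⟪-(ContinuousLinearMap.adjoint B₂ (xb t)) - T₂ (zb t - z t), zb t - zba⟫ →
      ∃ v : Z, (∀ z' : Z, f₂ z' ≥ f₂ zba + ⟪v, z' - zba⟫ - εz) ∧
        ‖v + ContinuousLinearMap.adjoint B₂ xba‖
          ≤ Real.sqrt ‖T₂‖ * (2 * R₀) / (ρ * ((k : ℝ) + 1)) := by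
  have hfejer : ∀ t : ℕ,
      ⟪y t - ystar, T₁ (y t - ystar)⟫ + ⟪z t - zstar, T₂ (z t - zstar)⟫
        + σ⁻¹ * ‖(x t - xstar) + σ • B₁ (y t - ystar)‖ ^ 2 ≤
      ⟪y 0 - ystar, T₁ (y 0 - ystar)⟫ + ⟪z 0 - zstar, T₂ (z 0 - zstar)⟫
        + σ⁻¹ * ‖(x 0 - xstar) + σ • B₁ (y 0 - ystar)‖ ^ 2 := by
    intro t
    induction t with
    | zero => exact le_rfl
    | succ t ih =>
      refine le_trans ?_ ih
      set e : X := B₁ (yb t) + B₂ (zb t) - c with he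
      set p : X := (xb t - xstar) + σ • B₁ (yb t - ystar) with hp
      have hy1 : y (t + 1) - ystar = (yb t - ystar) + (1 - ρ) • (y t - yb t) := by
        rw [H4y]; module
      have hy0 : y t - ystar = (yb t - ystar) + (y t - yb t) := by module
      have hz1 : z (t + 1) - zstar = (zb t - zstar) + (1 - ρ) • (z t - zb t) := by
        rw [H4z]; module
      have hz0 : z t - zstar = (zb t - zstar) + (z t - zb t) := by module
      -- The multiplier component of the displacement is `-σ` times the primal residual.
      have hres : (x t - xb t) + σ • B₁ (y t - yb t) = -(σ • e) := by
        rw [H2 t, he, map_sub]; module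
      have hx0 : (x t - xstar) + σ • B₁ (y t - ystar) = p + (-(σ • e)) := by
        rw [← hres, hp]; simp only [map_sub]; module
      have hx1 : (x (t + 1) - xstar) + σ • B₁ (y (t + 1) - ystar)
          = p + (1 - ρ) • (-(σ • e)) := by
        rw [← hres, hp, H4x, H4y]; simp only [map_sub, map_add, map_smul]; module
      have hIx := relax_identity (ContinuousLinearMap.id ℝ X) (fun _ _ => rfl) ρ p (-(σ • e))
      simp only [ContinuousLinearMap.id_apply, real_inner_self_eq_norm_sq] at hIx
      have hIy := relax_identity T₁ hT₁sa ρ (yb t - ystar) (y t - yb t)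
      have hIz := relax_identity T₂ hT₂sa ρ (zb t - zstar) (z t - zb t)
      rw [← hy1, ← hy0] at hIy
      rw [← hz1, ← hz0] at hIz
      rw [← hx1, ← hx0] at hIx
      have hmono_z : ⟪xb t - xstar, B₂ (zb t - zstar)⟫ ≤ ⟪T₂ (z t - zb t), zb t - zstar⟫ := by
        have h1 := H1 t zstar
        have h2 := hK2 (zb t)
        simp only [inner_sub_left, inner_sub_right, inner_neg_left,
          ContinuousLinearMap.adjoint_inner_left, map_sub] at h1 h2 ⊢
        linarith
      have hmono_y : ⟪xb t + σ • e - xstar, B₁ (yb t - ystar)⟫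
          ≤ ⟪T₁ (y t - yb t), yb t - ystar⟫ := by
        have h1 := H3 t ystar
        rw [← he] at h1
        have h2 := hK1 (yb t)
        generalize xb t + σ • e = q at h1 ⊢
        simp only [inner_sub_left, inner_sub_right, inner_neg_left,
          ContinuousLinearMap.adjoint_inner_left, map_sub] at h1 h2 ⊢
        linarith
      have hsplit : ⟪xb t - xstar, B₂ (zb t - zstar)⟫
          + ⟪xb t + σ • e - xstar, B₁ (yb t - ystar)⟫ = ⟪e, p⟫ := by
        have hB₂ : B₂ (zb t - zstar) = e - B₁ (yb t - ystar) := by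
          rw [he, ← hK3, map_sub, map_sub]; abel
        rw [hB₂, hp]
        have hq : xb t + σ • e - xstar = (xb t - xstar) + σ • e := by abel
        rw [hq]
        generalize xb t - xstar = dx
        generalize B₁ (yb t - ystar) = b
        simp only [inner_sub_right, inner_add_left, inner_add_right, real_inner_smul_left,
          real_inner_smul_right]
        rw [real_inner_comm e dx]
        ring
      have hcross : σ⁻¹ * ⟪-(σ • e), p⟫ = -⟪e, p⟫ := by
        rw [inner_neg_left, real_inner_smul_left]; field_simp
      have hpos : 0 ≤ ρ * (2 - ρ) := mul_nonneg hρ0.le (by linarith)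
      have n1 := mul_nonneg hpos (hT₁psd (y t - yb t))
      have n2 := mul_nonneg hpos (hT₂psd (z t - zb t))
      have n3 : 0 ≤ ρ * (2 - ρ) * (σ⁻¹ * ‖-(σ • e)‖ ^ 2) :=
        mul_nonneg hpos (by positivity)
      have n4 : 0 ≤ ρ * (⟪T₁ (y t - yb t), yb t - ystar⟫ + ⟪T₂ (z t - zb t), zb t - zstar⟫
          + σ⁻¹ * ⟪-(σ • e), p⟫) := mul_nonneg hρ0.le (by rw [hcross]; linarith)
      rw [hIy, hIz, hIx]
      linarith
  have hQ0 : R₀ ^ 2 = ⟪y 0 - ystar, T₁ (y 0 - ystar)⟫ + ⟪z 0 - zstar, T₂ (z 0 - zstar)⟫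
      + σ⁻¹ * ‖(x 0 - xstar) + σ • B₁ (y 0 - ystar)‖ ^ 2 := by
    rw [hR₀, Real.sq_sqrt]
    have := hT₁psd (y 0 - ystar)
    have := hT₂psd (z 0 - zstar)
    positivity
  have hR₀nn : 0 ≤ R₀ := hR₀ ▸ Real.sqrt_nonneg _
  have hz_le : ∀ t, ⟪z t - zstar, T₂ (z t - zstar)⟫ ≤ R₀ ^ 2 := by
    intro t
    have h := hfejer t
    rw [← hQ0] at h
    have h1 := hT₁psd (y t - ystar)
    have h2 : 0 ≤ σ⁻¹ * ‖(x t - xstar) + σ • B₁ (y t - ystar)‖ ^ 2 := by positivity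
    linarith
  intro k zba za xba εz hzba hza hxba hεz
  have hk : (0 : ℝ) < (k : ℝ) + 1 := by positivity
  set w : ℝ := 1 / ((k : ℝ) + 1) with hw
  have hw0 : 0 ≤ w := by positivity
  have hsum1 : ∑ _t ∈ Finset.range (k + 1), w = 1 := by
    rw [Finset.sum_const, Finset.card_range, nsmul_eq_mul, hw]
    push_cast
    field_simp
  refine ⟨w • ∑ t ∈ Finset.range (k + 1),
    (-(ContinuousLinearMap.adjoint B₂ (xb t)) - T₂ (zb t - z t)), ?_, ?_⟩
  · intro z'
    have hJ : f₂ zba ≤ ∑ t ∈ Finset.range (k + 1), w * f₂ (zb t) := by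
      have := hf₂.map_sum_le (t := Finset.range (k + 1)) (w := fun _ => w) (p := zb)
        (fun _ _ => hw0) hsum1 (fun _ _ => Set.mem_univ _)
      rw [← Finset.smul_sum, ← hzba] at this
      simpa only [smul_eq_mul] using this
    have hS : ∑ t ∈ Finset.range (k + 1), w * (f₂ (zb t) +
        ⟪-(ContinuousLinearMap.adjoint B₂ (xb t)) - T₂ (zb t - z t), z' - zb t⟫)
        ≤ ∑ _t ∈ Finset.range (k + 1), w * f₂ z' :=
      Finset.sum_le_sum fun t _ => mul_le_mul_of_nonneg_left (H1 t z') hw0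
    rw [← Finset.sum_mul, hsum1, one_mul] at hS
    have hI : ∑ t ∈ Finset.range (k + 1), w *
        ⟪-(ContinuousLinearMap.adjoint B₂ (xb t)) - T₂ (zb t - z t), z' - zb t⟫
        = ⟪w • ∑ t ∈ Finset.range (k + 1),
          (-(ContinuousLinearMap.adjoint B₂ (xb t)) - T₂ (zb t - z t)), z' - zba⟫ - εz := by
      rw [hεz, real_inner_smul_left, sum_inner, Finset.mul_sum, Finset.mul_sum,
        ← Finset.sum_sub_distrib]
      refine Finset.sum_congr rfl fun t _ => ?_
      rw [← mul_sub, ← inner_sub_right]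
      congr 2
      abel
    simp only [mul_add, Finset.sum_add_distrib] at hS
    rw [hI] at hS
    linarith
  · have htel : ∑ t ∈ Finset.range (k + 1), (zb t - z t) = ρ⁻¹ • (z (k + 1) - z 0) := by
      rw [← Finset.sum_range_sub, Finset.smul_sum]
      refine Finset.sum_congr rfl fun t _ => ?_
      have : z (t + 1) - z t = ρ • (zb t - z t) := by rw [H4z]; module
      rw [this, inv_smul_smul₀ hρ0.ne']
    have hv : w • ∑ t ∈ Finset.range (k + 1),
        (-(ContinuousLinearMap.adjoint B₂ (xb t)) - T₂ (zb t - z t))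
          + ContinuousLinearMap.adjoint B₂ xba
        = -((w * ρ⁻¹) • T₂ (z (k + 1) - z 0)) := by
      rw [hxba, map_smul, map_sum, Finset.sum_sub_distrib, Finset.sum_neg_distrib, ← map_sum T₂,
        htel, map_smul]
      module
    have hT : ‖T₂ (z (k + 1) - z 0)‖ ≤ Real.sqrt ‖T₂‖ * (2 * R₀) := by
      refine (pow_le_pow_iff_left₀ (norm_nonneg _) (by positivity) two_ne_zero).mp ?_
      have h1 := norm_sq_le_of_psd T₂ hT₂sa hT₂psd (z (k + 1) - z 0)
      have h2 := psd_sub_le T₂ hT₂psd (z (k + 1) - zstar) (z 0 - zstar)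
      rw [sub_sub_sub_cancel_right] at h2
      have h3 : ⟪z (k + 1) - z 0, T₂ (z (k + 1) - z 0)⟫ ≤ (2 * R₀) ^ 2 := by
        linarith [hz_le (k + 1), hz_le 0]
      rw [mul_pow, Real.sq_sqrt (norm_nonneg _)]
      exact h1.trans (mul_le_mul_of_nonneg_left h3 (norm_nonneg _))
    rw [hv, norm_neg, norm_smul, Real.norm_of_nonneg (by positivity)]
    calc w * ρ⁻¹ * ‖T₂ (z (k + 1) - z 0)‖
        ≤ w * ρ⁻¹ * (Real.sqrt ‖T₂‖ * (2 * R₀)) := mul_le_mul_of_nonneg_left hT (by positivity)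
      _ = Real.sqrt ‖T₂‖ * (2 * R₀) / (ρ * ((k : ℝ) + 1)) := by
        rw [hw]; field_simp
end

section
/- In the pADMM setting, assume a KKT point (y*, z*, x*) exists, and set R₀ := sqrt( ⟨y⁰ − y*, T₁(y⁰ − y*)⟩ + ⟨z⁰ − z*, T₂(z⁰ − z*)⟩ + σ⁻¹ ‖(x⁰ − x*) + σ B₁(y⁰ − y*)‖² ). Then for every k ≥ 0, with ȳ_a^k, y_a^k, z̄_a^k, x̄_a^k the ergodic averages of ȳ^t, y^t, z̄^t, x̄^t over t = 0, …, k and ε̄_y^k := (1/(k+1)) Σ_{t=0}^k ⟨−B₁*(x̄^t + σ(B₁ ȳ^t + B₂ z̄^t − c)) − T₁(ȳ^t − y^t), ȳ^t − ȳ_a^k⟩, there exists a vector v ∈ Y that is an ε̄_y^k-subgradient of f₁ at ȳ_a^k (i.e. f₁(y') ≥ f₁(ȳ_a^k) + ⟨v, y' − ȳ_a^k⟩ − ε̄_y^k for all y') and satisfies ‖v + B₁* x̄_a^k‖ ≤ (sqrt(σ)‖B₁‖ + sqrt(‖T₁‖)) · 2 R₀ / (ρ(k+1)), where ‖B₁‖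 and ‖T₁‖ are operator norms. -/
/-!
Write `w = x + σ B₁ y` and measure the distance of an iterate to the KKT point by
`V k = ⟪y k - y*, T₁ (y k - y*)⟫ + ⟪z k - z*, T₂ (z k - z*)⟫ + σ⁻¹ ‖w k - w*‖²`.
Since `σ (B₁ ȳ + B₂ z̄ - c) = w̄ - w`, adding the monotonicity inequalities of `∂f₁` and `∂f₂` between
the point `(ȳ, z̄)` and the KKT point says that `u - ū` and `ū - u*` have nonnegative inner product in
the semi-inner product defining `V`. With `ρ ≤ 2` the relaxed step therefore does not increase `V`
(`relaxed_quad_le`), so `V k ≤ V 0 = R₀²` for all `k`.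

The vector `v` is the average of the subgradients `v t` of `f₁` at `ȳ t`; averaging the subgradient
inequalities and applying Jensen's inequality gives the `ε`-subgradient property
(`ergodic_subgradient`). In `v + B₁* x̄ₐ` the summands are `-B₁* (w̄ t - w t) - T₁ (ȳ t - y t)`, and
`ρ (w̄ t - w t) = w (t+1) - w t`, `ρ (ȳ t - y t) = y (t+1) - y t`, so the sum telescopes to
`-ρ⁻¹ (B₁* (w (k+1) - w 0) + T₁ (y (k+1) - y 0))`. The bound on `V` controls both terms, the second
through `‖T₁ u‖ ≤ √‖T₁‖ √⟪u, T₁ u⟫` (`norm_apply_le_sqrt`).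
-/

open RealInnerProductSpace

/-- Change of the quadratic form of `T` under the over-relaxed step `e ↦ (1 - ρ) e + ρ e'`; the
discarded term is `ρ (2 - ρ) ⟪e - e', T (e - e')⟫`. -/
lemma relaxed_quad_le {E : Type*} [NormedAddCommGroup E] [InnerProductSpace ℝ E]
    (T : E →L[ℝ] E) (hsa : ∀ u v : E, ⟪T u, v⟫ = ⟪u, T v⟫) (hpsd : ∀ u : E, 0 ≤ ⟪u, T u⟫)
    {ρ : ℝ} (hρ0 : 0 < ρ) (hρ2 : ρ ≤ 2) (e e' : E) :
    ⟪(1 - ρ) • e + ρ • e', T ((1 - ρ) • e + ρ • e')⟫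
      ≤ ⟪e, T e⟫ - 2 * ρ * ⟪T (e - e'), e'⟫ := by
  have h := mul_nonneg (mul_nonneg hρ0.le (sub_nonneg.2 hρ2)) (hpsd (e - e'))
  have hc : ⟪e', T e⟫ = ⟪e, T e'⟫ := by rw [← hsa, real_inner_comm]
  have h1 : ⟪T e, e'⟫ = ⟪e, T e'⟫ := hsa _ _
  have h2 : ⟪T e', e'⟫ = ⟪e', T e'⟫ := hsa _ _
  simp only [map_add, map_sub, map_smul, inner_add_left, inner_add_right, inner_sub_left,
    inner_sub_right, real_inner_smul_left, real_inner_smul_right, hc, h1, h2] at h ⊢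
  nlinarith [h]

lemma norm_apply_le_sqrt {E : Type*} [NormedAddCommGroup E] [InnerProductSpace ℝ E]
    (T : E →L[ℝ] E) (hsa : ∀ u v : E, ⟪T u, v⟫ = ⟪u, T v⟫) (hpsd : ∀ u : E, 0 ≤ ⟪u, T u⟫)
    (u : E) : ‖T u‖ ≤ √‖T‖ * √⟪u, T u⟫ := by
  rcases eq_or_ne T 0 with rfl | hT
  · simp
  have hs : 0 < ‖T‖ := norm_pos_iff.2 hT
  rw [← Real.sqrt_mul hs.le]
  apply Real.le_sqrt_of_sq_le
  -- `u - ‖T‖⁻¹ T u` is the gradient step minimising the quadratic upper bound of the form of `T`.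
  have h := hpsd (u - ‖T‖⁻¹ • T u)
  have h1 : ⟪T u, T (T u)⟫ ≤ ‖T‖ * ‖T u‖ ^ 2 := by
    calc ⟪T u, T (T u)⟫ ≤ ‖T u‖ * ‖T (T u)‖ := real_inner_le_norm _ _
      _ ≤ ‖T u‖ * (‖T‖ * ‖T u‖) := by gcongr; exact T.le_opNorm _
      _ = _ := by ring
  have h2 : ⟪u, T (T u)⟫ = ‖T u‖ ^ 2 := by rw [← hsa, real_inner_self_eq_norm_sq]
  simp only [map_sub, map_smul, inner_sub_left, inner_sub_right, real_inner_smul_left,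
    real_inner_smul_right, h2, real_inner_self_eq_norm_sq] at h
  have h3 := mul_le_mul_of_nonneg_left h1 (by positivity : 0 ≤ ‖T‖⁻¹ * ‖T‖⁻¹)
  have h4 : ‖T‖⁻¹ * ‖T‖⁻¹ * (‖T‖ * ‖T u‖ ^ 2) = ‖T‖⁻¹ * ‖T u‖ ^ 2 := by field_simp
  have h5 : ‖T‖⁻¹ * ‖T u‖ ^ 2 ≤ ⟪u, T u⟫ := by nlinarith
  rwa [inv_mul_le_iff₀ hs] at h5

/-- The average of subgradients at points `p t` is an `ε`-subgradient at the average of the `p t`,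
where `ε` is the averaged linearisation gap. -/
lemma ergodic_subgradient {E : Type*} [NormedAddCommGroup E] [InnerProductSpace ℝ E]
    {f : E → ℝ} (hf : ConvexOn ℝ Set.univ f) (p g : ℕ → E)
    (hg : ∀ t y', f y' ≥ f (p t) + ⟪g t, y' - p t⟫) (k : ℕ) (a : E)
    (ha : a = (1 / ((k : ℝ) + 1)) • ∑ t ∈ Finset.range (k + 1), p t) (y' : E) :
    f y' ≥ f a + ⟪(1 / ((k : ℝ) + 1)) • ∑ t ∈ Finset.range (k + 1), g t, y' - a⟫
      - (1 / ((k : ℝ) + 1)) * ∑ t ∈ Finset.range (k + 1), ⟪g t, p t - a⟫ := by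
  have hk : (0 : ℝ) < k + 1 := by positivity
  have hJ : f a ≤ (1 / ((k : ℝ) + 1)) * ∑ t ∈ Finset.range (k + 1), f (p t) := by
    have := hf.map_sum_le (t := Finset.range (k + 1)) (w := fun _ => 1 / ((k : ℝ) + 1)) (p := p)
      (fun _ _ => by positivity) (by simp; field_simp) (fun _ _ => Set.mem_univ _)
    rwa [← Finset.smul_sum, ← Finset.smul_sum, ← ha, smul_eq_mul] at this
  have hS : ∑ t ∈ Finset.range (k + 1), (f (p t) + ⟪g t, y' - a⟫ - ⟪g t, p t - a⟫)
      ≤ ((k : ℝ) + 1) * f y' := by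
    calc _ ≤ ∑ t ∈ Finset.range (k + 1), f y' := by
          refine Finset.sum_le_sum fun t _ => ?_
          have h := hg t y'
          have : ⟪g t, y' - a⟫ - ⟪g t, p t - a⟫ = ⟪g t, y' - p t⟫ := by
            rw [← inner_sub_right]; congr 1; abel
          linarith
      _ = _ := by simp
  rw [Finset.sum_sub_distrib, Finset.sum_add_distrib] at hS
  have h := mul_le_mul_of_nonneg_left hS (by positivity : 0 ≤ 1 / ((k : ℝ) + 1))
  have h1 : 1 / ((k : ℝ) + 1) * (((k : ℝ) + 1) * f y') = f y' := by field_simp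
  rw [real_inner_smul_left, sum_inner]
  rw [h1] at h
  linarith

/-- Telescoping of a relaxed iteration. -/
lemma sum_relaxed_sub {E : Type*} [AddCommGroup E] [Module ℝ E] {ρ : ℝ} (hρ : 0 < ρ)
    {w wb : ℕ → E} (h : ∀ k, w (k + 1) = (1 - ρ) • w k + ρ • wb k) (n : ℕ) :
    ∑ t ∈ Finset.range n, (wb t - w t) = ρ⁻¹ • (w n - w 0) := by
  rw [← Finset.sum_range_sub, Finset.smul_sum]
  refine Finset.sum_congr rfl fun t _ => ?_
  rw [h t, eq_inv_smul_iff₀ hρ.ne']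
  module

theorem stmt_14 {Y Z X : Type*}
    [NormedAddCommGroup Y] [InnerProductSpace ℝ Y] [FiniteDimensional ℝ Y]
    [NormedAddCommGroup Z] [InnerProductSpace ℝ Z] [FiniteDimensional ℝ Z]
    [NormedAddCommGroup X] [InnerProductSpace ℝ X] [FiniteDimensional ℝ X]
    (B₁ : Y →L[ℝ] X) (B₂ : Z →L[ℝ] X) (c : X)
    (σ : ℝ) (hσ : 0 < σ) (ρ : ℝ) (hρ0 : 0 < ρ) (hρ2 : ρ ≤ 2)
    (T₁ : Y →L[ℝ] Y) (hT₁sa : ∀ u v : Y, ⟪T₁ u, v⟫ = ⟪u, T₁ v⟫)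
    (hT₁psd : ∀ u : Y, 0 ≤ ⟪u, T₁ u⟫)
    (T₂ : Z →L[ℝ] Z) (hT₂sa : ∀ u v : Z, ⟪T₂ u, v⟫ = ⟪u, T₂ v⟫)
    (hT₂psd : ∀ u : Z, 0 ≤ ⟪u, T₂ u⟫)
    (f₁ : Y → ℝ) (hf₁ : ConvexOn ℝ Set.univ f₁)
    (f₂ : Z → ℝ) (hf₂ : ConvexOn ℝ Set.univ f₂)
    (y : ℕ → Y) (z : ℕ → Z) (x : ℕ → X)
    (yb : ℕ → Y) (zb : ℕ → Z) (xb : ℕ → X)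
    (H1 : ∀ k : ℕ, ∀ z' : Z, f₂ z' ≥ f₂ (zb k) +
      ⟪-(ContinuousLinearMap.adjoint B₂ (xb k)) - T₂ (zb k - z k), z' - zb k⟫)
    (H2 : ∀ k : ℕ, xb k = x k + σ • (B₁ (y k) + B₂ (zb k) - c))
    (H3 : ∀ k : ℕ, ∀ y' : Y, f₁ y' ≥ f₁ (yb k) +
      ⟪-(ContinuousLinearMap.adjoint B₁ (xb k + σ • (B₁ (yb k) + B₂ (zb k) - c)))
        - T₁ (yb k - y k), y' - yb k⟫)
    (H4y : ∀ k : ℕ, y (k + 1) = (1 - ρ) • y k + ρ • yb k)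
    (H4z : ∀ k : ℕ, z (k + 1) = (1 - ρ) • z k + ρ • zb k)
    (H4x : ∀ k : ℕ, x (k + 1) = (1 - ρ) • x k + ρ • xb k)
    (ystar : Y) (zstar : Z) (xstar : X)
    (hK1 : ∀ y' : Y, f₁ y' ≥ f₁ ystar + ⟪-(ContinuousLinearMap.adjoint B₁ xstar), y' - ystar⟫)
    (hK2 : ∀ z' : Z, f₂ z' ≥ f₂ zstar + ⟪-(ContinuousLinearMap.adjoint B₂ xstar), z' - zstar⟫)
    (hK3 : B₁ ystar + B₂ zstar = c)
    (R₀ : ℝ)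
    (hR₀ : R₀ = Real.sqrt (⟪y 0 - ystar, T₁ (y 0 - ystar)⟫ + ⟪z 0 - zstar, T₂ (z 0 - zstar)⟫
      + σ⁻¹ * ‖(x 0 - xstar) + σ • B₁ (y 0 - ystar)‖ ^ 2)) :
    ∀ k : ℕ, ∀ yba ya : Y, ∀ zba : Z, ∀ xba : X, ∀ εy : ℝ,
      yba = (1 / ((k : ℝ) + 1)) • ∑ t ∈ Finset.range (k + 1), yb t →
      ya = (1 / ((k : ℝ) + 1)) • ∑ t ∈ Finset.range (k + 1), y t →
      zba = (1 / ((k : ℝ) + 1)) • ∑ t ∈ Finset.range (k + 1), zb t →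
      xba = (1 / ((k : ℝ) + 1)) • ∑ t ∈ Finset.range (k + 1), xb t →
      εy = (1 / ((k : ℝ) + 1)) * ∑ t ∈ Finset.range (k + 1),
        ⟪-(ContinuousLinearMap.adjoint B₁ (xb t + σ • (B₁ (yb t) + B₂ (zb t) - c)))
          - T₁ (yb t - y t), yb t - yba⟫ →
      ∃ v : Y, (∀ y' : Y, f₁ y' ≥ f₁ yba + ⟪v, y' - yba⟫ - εy) ∧
        ‖v + ContinuousLinearMap.adjoint B₁ xba‖
          ≤ (Real.sqrt σ * ‖B₁‖ + Real.sqrt ‖T₁‖) * (2 * R₀) / (ρ * ((k : ℝ) + 1)) := by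
  set w : ℕ → X := fun k => x k + σ • B₁ (y k) with hw
  set wb : ℕ → X := fun k => xb k + σ • B₁ (yb k) with hwb
  set ws : X := xstar + σ • B₁ ystar with hws
  have H4w : ∀ k, w (k + 1) = (1 - ρ) • w k + ρ • wb k := by
    intro k
    simp only [hw, hwb, H4x, H4y, map_add, map_smul]
    module
  have hres : ∀ k, σ • (B₁ (yb k) + B₂ (zb k) - c) = wb k - w k := by
    intro k
    simp only [hw, hwb, H2]
    module
  set V : ℕ → ℝ := fun k => ⟪y k - ystar, T₁ (y k - ystar)⟫
    + ⟪z k - zstar, T₂ (z k - zstar)⟫ + σ⁻¹ * ‖w k - ws‖ ^ 2 with hV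
  have hstep : ∀ k, V (k + 1) ≤ V k := by
    intro k
    have hy := relaxed_quad_le T₁ hT₁sa hT₁psd hρ0 hρ2 (y k - ystar) (yb k - ystar)
    have hz := relaxed_quad_le T₂ hT₂sa hT₂psd hρ0 hρ2 (z k - zstar) (zb k - zstar)
    have hx := relaxed_quad_le (ContinuousLinearMap.id ℝ X) (fun _ _ => rfl)
      (fun u => real_inner_self_nonneg) hρ0 hρ2 (w k - ws) (wb k - ws)
    rw [show (1 - ρ) • (y k - ystar) + ρ • (yb k - ystar) = y (k + 1) - ystar by
      rw [H4y]; module, sub_sub_sub_cancel_right] at hy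
    rw [show (1 - ρ) • (z k - zstar) + ρ • (zb k - zstar) = z (k + 1) - zstar by
      rw [H4z]; module, sub_sub_sub_cancel_right] at hz
    rw [show (1 - ρ) • (w k - ws) + ρ • (wb k - ws) = w (k + 1) - ws by
      rw [H4w]; module, sub_sub_sub_cancel_right] at hx
    simp only [ContinuousLinearMap.id_apply, real_inner_self_eq_norm_sq] at hx
    have m1 := H3 k ystar
    have m2 := hK1 (yb k)
    have m3 := H1 k zstar
    have m4 := hK2 (zb k)
    -- Nonnegativity of the inner product of `u - ū` and `ū - u*`.
    have key : 0 ≤ ⟪T₁ (y k - yb k), yb k - ystar⟫ + ⟪T₂ (z k - zb k), zb k - zstar⟫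
        + σ⁻¹ * ⟪w k - wb k, wb k - ws⟫ := by
      have hr : σ⁻¹ * ⟪w k - wb k, wb k - ws⟫
          = -⟪xb k + σ • (B₁ (yb k) + B₂ (zb k) - c) - xstar, B₁ (yb k - ystar)⟫
            - ⟪xb k - xstar, B₂ (zb k - zstar)⟫ := by
        have e1 : w k - wb k = -(σ • (B₁ (yb k - ystar) + B₂ (zb k - zstar))) := by
          rw [← neg_sub (wb k), ← hres, ← hK3]
          simp only [map_sub]
          module
        have e2 : B₁ (yb k) + B₂ (zb k) - c = B₁ (yb k - ystar) + B₂ (zb k - zstar) := by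
          rw [← hK3]; simp only [map_sub]; abel
        have e3 : wb k - ws = (xb k - xstar) + σ • B₁ (yb k - ystar) := by
          simp only [hwb, hws, map_sub]; module
        rw [e1, e2, e3, show xb k + σ • (B₁ (yb k - ystar) + B₂ (zb k - zstar)) - xstar
          = (xb k - xstar) + σ • (B₁ (yb k - ystar) + B₂ (zb k - zstar)) by abel]
        generalize xb k - xstar = p
        generalize B₁ (yb k - ystar) = q
        generalize B₂ (zb k - zstar) = s
        simp only [inner_neg_left, real_inner_smul_left, inner_add_left, inner_add_right,
          real_inner_smul_right, smul_add]
        rw [real_inner_comm p q, real_inner_comm p s]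
        field_simp
        ring
      rw [hr]
      rw [← neg_sub (yb k) ystar, inner_neg_right] at m1
      rw [← neg_sub (zb k) zstar, inner_neg_right] at m3
      rw [← neg_sub (yb k) (y k), ← neg_sub (zb k) (z k), map_neg, map_neg]
      rw [inner_sub_left] at m1 m3
      simp only [inner_neg_left, ContinuousLinearMap.adjoint_inner_left] at m1 m2 m3 m4 ⊢
      rw [inner_sub_left _ xstar, inner_sub_left _ xstar]
      linarith
    have hx' := mul_le_mul_of_nonneg_left hx (inv_nonneg.2 hσ.le)
    have key' := mul_nonneg hρ0.le key
    simp only [hV]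
    nlinarith
  have hVle : ∀ k, V k ≤ V 0 := fun k => antitone_nat_of_succ_le hstep (Nat.zero_le k)
  have hR : R₀ = √(V 0) := by
    rw [hR₀]
    simp only [hV, hw, hws, map_sub]
    congr 5
    module
  have hVR : ∀ k, √(V k) ≤ R₀ := fun k => hR ▸ Real.sqrt_le_sqrt (hVle k)
  have hwR : ∀ k, ‖w k - ws‖ ≤ √σ * R₀ := by
    intro k
    refine le_trans ?_ (mul_le_mul_of_nonneg_left (hVR k) (Real.sqrt_nonneg σ))
    rw [← Real.sqrt_mul hσ.le]
    apply Real.le_sqrt_of_sq_le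
    have h : σ⁻¹ * ‖w k - ws‖ ^ 2 ≤ V k := by
      have := hT₁psd (y k - ystar)
      have := hT₂psd (z k - zstar)
      simp only [hV]
      linarith
    rwa [inv_mul_le_iff₀ hσ] at h
  have hyR : ∀ k, ‖T₁ (y k - ystar)‖ ≤ √‖T₁‖ * R₀ := by
    intro k
    refine (norm_apply_le_sqrt T₁ hT₁sa hT₁psd _).trans
      (mul_le_mul_of_nonneg_left (le_trans (Real.sqrt_le_sqrt ?_) (hVR k)) (Real.sqrt_nonneg _))
    have := hT₂psd (z k - zstar)
    have : 0 ≤ σ⁻¹ * ‖w k - ws‖ ^ 2 := by positivity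
    simp only [hV]
    linarith
  intro k yba ya zba xba εy hyba _ _ hxba hε
  refine ⟨(1 / ((k : ℝ) + 1)) • ∑ t ∈ Finset.range (k + 1),
    (-(ContinuousLinearMap.adjoint B₁ (xb t + σ • (B₁ (yb t) + B₂ (zb t) - c)))
      - T₁ (yb t - y t)), fun y' => ?_, ?_⟩
  · rw [hε]
    exact ergodic_subgradient hf₁ yb _ H3 k yba hyba y'
  · have hk : (0 : ℝ) < k + 1 := by positivity
    have hsum : ∑ t ∈ Finset.range (k + 1),
        (-(ContinuousLinearMap.adjoint B₁ (xb t + σ • (B₁ (yb t) + B₂ (zb t) - c)))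
          - T₁ (yb t - y t))
        = -ContinuousLinearMap.adjoint B₁ (∑ t ∈ Finset.range (k + 1), xb t)
          - ρ⁻¹ • (ContinuousLinearMap.adjoint B₁ (w (k + 1) - w 0) + T₁ (y (k + 1) - y 0)) := by
      rw [smul_add, ← map_smul, ← map_smul, ← sum_relaxed_sub hρ0 H4w, ← sum_relaxed_sub hρ0 H4y,
        map_sum, map_sum, map_sum, ← Finset.sum_add_distrib, ← Finset.sum_neg_distrib,
        ← Finset.sum_sub_distrib]
      refine Finset.sum_congr rfl fun t _ => ?_
      rw [hres, map_add]
      abel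
    have hv : ∀ P Q : Y, (1 / ((k : ℝ) + 1)) • (-P - ρ⁻¹ • Q) + (1 / ((k : ℝ) + 1)) • P
        = -((ρ * ((k : ℝ) + 1))⁻¹ • Q) := by
      intro P Q
      rw [mul_inv, one_div]
      module
    rw [hsum, hxba, map_smul, hv, norm_neg, norm_smul, Real.norm_of_nonneg (by positivity),
      inv_mul_eq_div]
    gcongr
    have hB : ‖ContinuousLinearMap.adjoint B₁ (w (k + 1) - w 0)‖ ≤ ‖B₁‖ * (2 * (√σ * R₀)) := by
      refine (ContinuousLinearMap.le_opNorm _ _).trans ?_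
      rw [LinearIsometryEquiv.norm_map]
      gcongr
      have := norm_sub_le (w (k + 1) - ws) (w 0 - ws)
      rw [sub_sub_sub_cancel_right] at this
      linarith [hwR (k + 1), hwR 0]
    have hT : ‖T₁ (y (k + 1) - y 0)‖ ≤ 2 * (√‖T₁‖ * R₀) := by
      have := norm_sub_le (T₁ (y (k + 1) - ystar)) (T₁ (y 0 - ystar))
      rw [← map_sub, sub_sub_sub_cancel_right] at this
      linarith [hyR (k + 1), hyR 0]
    refine (norm_add_le _ _).trans ((add_le_add hB hT).trans_eq ?_)
    ring
end

section
/- In the pADMM setting, assume a KKT point (y*, z*, x*) exists, and set R₀ := sqrt( ⟨y⁰ − y*, T₁(y⁰ − y*)⟩ + ⟨z⁰ − z*, T₂(z⁰ − z*)⟩ + σ⁻¹ ‖(x⁰ − x*) + σ B₁(y⁰ − y*)‖² ). Then for every k ≥ 0, the ergodic averages ȳ_a^k := (1/(k+1)) Σ_{t=0}^k ȳ^t and z̄_a^k := (1/(k+1)) Σ_{t=0}^k z̄^t satisfy the objective-error lower bound f₁(ȳ_a^k) + f₂(z̄_a^k) − f₁(y*) − f₂(z*) ≥ −2 R₀ ‖x*‖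 / (sqrt(σ) ρ (k+1)). -/
open RealInnerProductSpace

/-!
The two subgradient inequalities of the KKT point bound the objective error from below by
`-⟪x*, r⟫`, where `r` is the average of the residuals `r_t = B₁ ȳ^t + B₂ z̄^t - c`, so it suffices
to bound `‖∑ r_t‖` by `2 R₀ / (√σ ρ)`.

With `e_k = x^k + σ B₁ y^k` one has `e_{k+1} - e_k = ρ σ r_k`, so the residuals telescope:
`ρ σ ∑_{t ≤ k} r_t = e_{k+1} - e_0`. The degenerate proximal-point structure of the iteration makes
the energy
`⟪y^k - y*, T₁ (y^k - y*)⟫ + ⟪z^k - z*, T₂ (z^k - z*)⟫ + σ⁻¹ ‖(x^k - x*) + σ B₁ (y^k - y*)‖²`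
nonincreasing: monotonicity of the subdifferentials shows that the energy's bilinear form is
nonpositive on the pair `(w̄^k - w*, w̄^k - w^k)`, where `w = (y, z, x)`, and `quad_relax_le` turns this into decrease for
every relaxation parameter `ρ ∈ [0, 2]`. Hence both `e_{k+1}` and `e_0` are within `√σ R₀` of
`e* = x* + σ B₁ y*`, and the triangle inequality finishes.
-/

/-- Over-relaxed step for a positive semidefinite quadratic form: moving from `a` to `a + ρ • d`
changes the form by `2 ρ ⟪a + d, T d⟫ - ρ (2 - ρ) ⟪d, T d⟫`, and the last term has a sign. -/
lemma quad_relax_le {E : Type*} [NormedAddCommGroup E] [InnerProductSpace ℝ E]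
    (T : E →L[ℝ] E) (hsa : ∀ u v : E, ⟪T u, v⟫ = ⟪u, T v⟫) (hpsd : ∀ u : E, 0 ≤ ⟪u, T u⟫)
    {ρ : ℝ} (hρ0 : 0 ≤ ρ) (hρ2 : ρ ≤ 2) (a d : E) :
    ⟪a + ρ • d, T (a + ρ • d)⟫ ≤ ⟪a, T a⟫ + 2 * ρ * ⟪a + d, T d⟫ := by
  have hs : ⟪d, T a⟫ = ⟪a, T d⟫ := by rw [← hsa, real_inner_comm]
  have hd : 0 ≤ ρ * (2 - ρ) * ⟪d, T d⟫ :=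
    mul_nonneg (mul_nonneg hρ0 (by linarith)) (hpsd d)
  simp only [map_add, map_smul, inner_add_left, inner_add_right, real_inner_smul_left,
    real_inner_smul_right, hs]
  nlinarith

lemma norm_le_of_energy_le {E : Type*} [NormedAddCommGroup E] {σ a V : ℝ} (hσ : 0 < σ)
    (ha : 0 ≤ a) (v : E) (h : a + σ⁻¹ * ‖v‖ ^ 2 ≤ V) :
    ‖v‖ ≤ Real.sqrt σ * Real.sqrt V := by
  rw [← Real.sqrt_mul hσ.le]
  apply Real.le_sqrt_of_sq_le
  have h1 : σ⁻¹ * ‖v‖ ^ 2 ≤ V := by linarith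
  rwa [inv_mul_le_iff₀ hσ] at h1

theorem stmt_15 {Y Z X : Type*}
    [NormedAddCommGroup Y] [InnerProductSpace ℝ Y] [FiniteDimensional ℝ Y]
    [NormedAddCommGroup Z] [InnerProductSpace ℝ Z] [FiniteDimensional ℝ Z]
    [NormedAddCommGroup X] [InnerProductSpace ℝ X] [FiniteDimensional ℝ X]
    (B₁ : Y →L[ℝ] X) (B₂ : Z →L[ℝ] X) (c : X)
    (σ : ℝ) (hσ : 0 < σ) (ρ : ℝ) (hρ0 : 0 < ρ) (hρ2 : ρ ≤ 2)
    (T₁ : Y →L[ℝ] Y) (hT₁sa : ∀ u v : Y, ⟪T₁ u, v⟫ = ⟪u, T₁ v⟫)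
    (hT₁psd : ∀ u : Y, 0 ≤ ⟪u, T₁ u⟫)
    (T₂ : Z →L[ℝ] Z) (hT₂sa : ∀ u v : Z, ⟪T₂ u, v⟫ = ⟪u, T₂ v⟫)
    (hT₂psd : ∀ u : Z, 0 ≤ ⟪u, T₂ u⟫)
    (f₁ : Y → ℝ) (hf₁ : ConvexOn ℝ Set.univ f₁)
    (f₂ : Z → ℝ) (hf₂ : ConvexOn ℝ Set.univ f₂)
    (y : ℕ → Y) (z : ℕ → Z) (x : ℕ → X)
    (yb : ℕ → Y) (zb : ℕ → Z) (xb : ℕ → X)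
    (H1 : ∀ k : ℕ, ∀ z' : Z, f₂ z' ≥ f₂ (zb k) +
      ⟪-(ContinuousLinearMap.adjoint B₂ (xb k)) - T₂ (zb k - z k), z' - zb k⟫)
    (H2 : ∀ k : ℕ, xb k = x k + σ • (B₁ (y k) + B₂ (zb k) - c))
    (H3 : ∀ k : ℕ, ∀ y' : Y, f₁ y' ≥ f₁ (yb k) +
      ⟪-(ContinuousLinearMap.adjoint B₁ (xb k + σ • (B₁ (yb k) + B₂ (zb k) - c)))
        - T₁ (yb k - y k), y' - yb k⟫)
    (H4y : ∀ k : ℕ, y (k + 1) = (1 - ρ) • y k + ρ • yb k)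
    (H4z : ∀ k : ℕ, z (k + 1) = (1 - ρ) • z k + ρ • zb k)
    (H4x : ∀ k : ℕ, x (k + 1) = (1 - ρ) • x k + ρ • xb k)
    (ystar : Y) (zstar : Z) (xstar : X)
    (hK1 : ∀ y' : Y, f₁ y' ≥ f₁ ystar + ⟪-(ContinuousLinearMap.adjoint B₁ xstar), y' - ystar⟫)
    (hK2 : ∀ z' : Z, f₂ z' ≥ f₂ zstar + ⟪-(ContinuousLinearMap.adjoint B₂ xstar), z' - zstar⟫)
    (hK3 : B₁ ystar + B₂ zstar = c)
    (R₀ : ℝ)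
    (hR₀ : R₀ = Real.sqrt (⟪y 0 - ystar, T₁ (y 0 - ystar)⟫ + ⟪z 0 - zstar, T₂ (z 0 - zstar)⟫
      + σ⁻¹ * ‖(x 0 - xstar) + σ • B₁ (y 0 - ystar)‖ ^ 2)) :
    ∀ k : ℕ, ∀ yba : Y, ∀ zba : Z,
      yba = (1 / ((k : ℝ) + 1)) • ∑ t ∈ Finset.range (k + 1), yb t →
      zba = (1 / ((k : ℝ) + 1)) • ∑ t ∈ Finset.range (k + 1), zb t →
      f₁ yba + f₂ zba - f₁ ystar - f₂ zstar
        ≥ -(2 * R₀ * ‖xstar‖) / (Real.sqrt σ * ρ * ((k : ℝ) + 1)) := by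
  set V : ℕ → ℝ := fun k => ⟪y k - ystar, T₁ (y k - ystar)⟫ + ⟪z k - zstar, T₂ (z k - zstar)⟫
      + σ⁻¹ * ‖(x k - xstar) + σ • B₁ (y k - ystar)‖ ^ 2 with hV
  set r : ℕ → X := fun k => B₁ (yb k) + B₂ (zb k) - c with hr
  have hgap : ∀ k, (xb k - x k) + σ • B₁ (yb k - y k) = σ • r k := by
    intro k
    simp only [hr, H2 k, map_sub]
    module
  have hfeas : ∀ k, B₁ (yb k - ystar) + B₂ (zb k - zstar) = r k := by
    intro k
    simp only [hr, ← hK3, map_sub]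
    abel
  have hmono : ∀ k, ⟪yb k - ystar, T₁ (yb k - y k)⟫ + ⟪zb k - zstar, T₂ (zb k - z k)⟫
      + ⟪(xb k - xstar) + σ • B₁ (yb k - ystar), r k⟫ ≤ 0 := by
    intro k
    have h1 := H1 k zstar
    have h2 := hK2 (zb k)
    have h3 := H3 k ystar
    have h4 := hK1 (yb k)
    rw [← neg_sub (zb k) zstar] at h1
    rw [← neg_sub (yb k) ystar] at h3
    change _ ≥ f₁ (yb k) + ⟪-(ContinuousLinearMap.adjoint B₁ (xb k + σ • r k))
      - T₁ (yb k - y k), _⟫ at h3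
    rw [inner_neg_right, inner_sub_left, inner_neg_left,
      ContinuousLinearMap.adjoint_inner_left] at h1 h3
    rw [inner_neg_left, ContinuousLinearMap.adjoint_inner_left] at h2 h4
    have e : ⟪(xb k - xstar) + σ • B₁ (yb k - ystar), r k⟫
        = ⟪xb k - xstar, B₁ (yb k - ystar)⟫ + ⟪xb k - xstar, B₂ (zb k - zstar)⟫
          + σ * ⟪r k, B₁ (yb k - ystar)⟫ := by
      rw [inner_add_left, real_inner_smul_left, real_inner_comm (r k) (B₁ (yb k - ystar)),
        ← inner_add_right, hfeas]
    rw [e, real_inner_comm (T₁ (yb k - y k)), real_inner_comm (T₂ (zb k - z k)),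
      inner_sub_left, inner_sub_left]
    rw [inner_add_left, real_inner_smul_left] at h3
    linarith
  have hstep : ∀ k, V (k + 1) ≤ V k := by
    intro k
    have q1 := quad_relax_le T₁ hT₁sa hT₁psd hρ0.le hρ2 (y k - ystar) (yb k - y k)
    have q2 := quad_relax_le T₂ hT₂sa hT₂psd hρ0.le hρ2 (z k - zstar) (zb k - z k)
    have q3 := quad_relax_le (ContinuousLinearMap.id ℝ X) (fun u v => rfl)
      (fun u => real_inner_self_nonneg) hρ0.le hρ2
      ((x k - xstar) + σ • B₁ (y k - ystar)) ((xb k - x k) + σ • B₁ (yb k - y k))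
    have a1 : y k - ystar + ρ • (yb k - y k) = y (k + 1) - ystar := by rw [H4y]; module
    have a2 : z k - zstar + ρ • (zb k - z k) = z (k + 1) - zstar := by rw [H4z]; module
    have a3 : (x k - xstar) + σ • B₁ (y k - ystar) + ρ • ((xb k - x k) + σ • B₁ (yb k - y k))
        = (x (k + 1) - xstar) + σ • B₁ (y (k + 1) - ystar) := by
      rw [H4x, H4y]; simp only [map_sub, map_add, map_smul]; module
    have a4 : (x k - xstar) + σ • B₁ (y k - ystar) + ((xb k - x k) + σ • B₁ (yb k - y k))
        = (xb k - xstar) + σ • B₁ (yb k - ystar) := by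
      simp only [map_sub]; module
    have b1 : y k - ystar + (yb k - y k) = yb k - ystar := by abel
    have b2 : z k - zstar + (zb k - z k) = zb k - zstar := by abel
    rw [a1, b1] at q1
    rw [a2, b2] at q2
    rw [a3, a4, hgap] at q3
    simp only [ContinuousLinearMap.id_apply, real_inner_self_eq_norm_sq,
      real_inner_smul_right] at q3
    have q3' := mul_le_mul_of_nonneg_left q3 (inv_pos.2 hσ).le
    have e : ∀ p s : ℝ, σ⁻¹ * (p + 2 * ρ * (σ * s)) = σ⁻¹ * p + 2 * ρ * s := by
      intro p s; field_simp
    rw [e] at q3'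
    have hm := mul_nonpos_of_nonneg_of_nonpos (by positivity : 0 ≤ 2 * ρ) (hmono k)
    simp only [hV]
    linarith
  have hanti : ∀ k, V k ≤ V 0 := fun k => antitone_nat_of_succ_le hstep (Nat.zero_le k)
  have hball : ∀ k, ‖(x k - xstar) + σ • B₁ (y k - ystar)‖ ≤ Real.sqrt σ * R₀ := by
    intro k
    rw [hR₀]
    exact norm_le_of_energy_le hσ (add_nonneg (hT₁psd _) (hT₂psd (z k - zstar))) _ (hanti k)
  have htel : ∀ n, (ρ * σ) • ∑ t ∈ Finset.range n, r t
      = ((x n - xstar) + σ • B₁ (y n - ystar)) - ((x 0 - xstar) + σ • B₁ (y 0 - ystar)) := by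
    intro n
    rw [Finset.smul_sum, ← Finset.sum_range_sub (fun n => (x n - xstar) + σ • B₁ (y n - ystar))]
    refine Finset.sum_congr rfl fun t _ => ?_
    rw [mul_smul, ← hgap, H4x, H4y]
    simp only [map_sub, map_add, map_smul]
    module
  have hsum : ∀ n, ‖∑ t ∈ Finset.range n, r t‖ ≤ 2 * R₀ / (Real.sqrt σ * ρ) := by
    intro n
    have h := norm_sub_le ((x n - xstar) + σ • B₁ (y n - ystar))
      ((x 0 - xstar) + σ • B₁ (y 0 - ystar))
    rw [← htel, norm_smul, Real.norm_of_nonneg (by positivity)] at h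
    have h' := h.trans (add_le_add (hball n) (hball 0))
    have hs := Real.sqrt_pos.2 hσ
    rw [le_div_iff₀ (by positivity)]
    refine le_of_mul_le_mul_left ?_ hs
    nth_rewrite 1 [← Real.mul_self_sqrt hσ.le] at h'
    linarith
  intro k yba zba hy hz
  have hk : (0 : ℝ) < (k : ℝ) + 1 := by positivity
  have havg : B₁ (yba - ystar) + B₂ (zba - zstar)
      = (1 / ((k : ℝ) + 1)) • ∑ t ∈ Finset.range (k + 1), r t := by
    have hc : (1 / ((k : ℝ) + 1)) • ((k + 1 : ℕ) • c) = c := by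
      rw [← Nat.cast_smul_eq_nsmul ℝ, smul_smul]
      push_cast
      rw [one_div_mul_cancel hk.ne', one_smul]
    simp only [hr, Finset.sum_sub_distrib, Finset.sum_add_distrib, Finset.sum_const,
      Finset.card_range, smul_sub, smul_add, hc]
    simp only [hy, hz, map_sub, map_smul, map_sum]
    rw [← hK3]
    abel
  have h1 := hK1 yba
  have h2 := hK2 zba
  rw [inner_neg_left, ContinuousLinearMap.adjoint_inner_left] at h1 h2
  have hcs := real_inner_le_norm xstar (B₁ (yba - ystar) + B₂ (zba - zstar))
  have hn : ‖B₁ (yba - ystar) + B₂ (zba - zstar)‖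
      ≤ 1 / ((k : ℝ) + 1) * (2 * R₀ / (Real.sqrt σ * ρ)) := by
    rw [havg, norm_smul, Real.norm_of_nonneg (by positivity)]
    exact mul_le_mul_of_nonneg_left (hsum _) (by positivity)
  have hb := mul_le_mul_of_nonneg_left hn (norm_nonneg xstar)
  have e : -(2 * R₀ * ‖xstar‖) / (Real.sqrt σ * ρ * ((k : ℝ) + 1))
      = -(‖xstar‖ * (1 / ((k : ℝ) + 1) * (2 * R₀ / (Real.sqrt σ * ρ)))) := by
    have hs := Real.sqrt_pos.2 hσ
    field_simp
  rw [inner_add_right] at hcs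
  rw [e]
  linarith
end

section
/- Let Y be a real inner product space, T₁ : Y → Y a continuous linear self-adjoint positive semidefinite map, and ρ ∈ (0, 2]. For any y, ȳ, y* ∈ Y, setting y⁺ := (1 − ρ) y + ρ ȳ, one has ⟨y* − ȳ, T₁(ȳ − y)⟩ ≤ (1/(2ρ)) ( ⟨y − y*, T₁(y − y*)⟩ − ⟨y⁺ − y*, T₁(y⁺ − y*)⟩ ). -/
open RealInnerProductSpace

/-- One-step seminorm telescoping inequality for a relaxed update. -/
theorem stmt_17 {Y : Type*} [NormedAddCommGroup Y] [InnerProductSpace ℝ Y]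
    (T₁ : Y →L[ℝ] Y)
    (hT₁sa : ∀ u v : Y, ⟪T₁ u, v⟫ = ⟪u, T₁ v⟫)
    (hT₁psd : ∀ u : Y, 0 ≤ ⟪u, T₁ u⟫)
    (ρ : ℝ) (hρ0 : 0 < ρ) (hρ2 : ρ ≤ 2)
    (y yb ystar : Y) :
    ⟪ystar - yb, T₁ (yb - y)⟫
      ≤ (1 / (2 * ρ)) * (⟪y - ystar, T₁ (y - ystar)⟫
        - ⟪((1 - ρ) • y + ρ • yb) - ystar, T₁ (((1 - ρ) • y + ρ • yb) - ystar)⟫) := by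
  have h_symm : ⟪ρ • (yb - y), T₁ (y - ystar)⟫ = ρ * ⟪y - ystar, T₁ (yb - y)⟫ := by
    rw [real_inner_smul_left, ← hT₁sa, real_inner_comm]
  have h_next : ((1 - ρ) • y + ρ • yb) - ystar = (y - ystar) + ρ • (yb - y) := by module
  have h_diff : ystar - yb = -(y - ystar) - (yb - y) := by abel
  -- With `a = y - ystar` and `d = yb - y`, symmetry of `T₁` turns the right-hand side into
  -- `-⟪a, T₁ d⟫ - (ρ / 2) * ⟪d, T₁ d⟫`, whereas the left-hand side is `-⟪a, T₁ d⟫ - ⟪d, T₁ d⟫`.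
  have h_rhs : (1 / (2 * ρ)) * (⟪y - ystar, T₁ (y - ystar)⟫
        - ⟪((1 - ρ) • y + ρ • yb) - ystar, T₁ (((1 - ρ) • y + ρ • yb) - ystar)⟫)
      = -⟪y - ystar, T₁ (yb - y)⟫ - ρ / 2 * ⟪yb - y, T₁ (yb - y)⟫ := by
    rw [h_next, map_add, inner_add_left, inner_add_right, inner_add_right, h_symm, map_smul,
      real_inner_smul_right, real_inner_smul_right, real_inner_smul_left]
    field_simp
    ring
  rw [h_rhs, h_diff, inner_sub_left, inner_neg_left]
  nlinarith [mul_nonneg (sub_nonneg.2 hρ2) (hT₁psd (yb - y))]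
end

section
/- Let ρ ∈ (0, 2] and define real sequences y, x : ℕ → ℝ by y(0) = 1, x(0) = 1, and for all k: y(k+1) = (1 − ρ) y(k) − ρ (x(k) + y(k)) and x(k+1) = (1 − ρ) x(k) + ρ (x(k) + y(k)). (These are the pADMM iterates, with shadow iterates ȳ(k) := −(x(k) + y(k)) and x̄(k) := x(k) + y(k), for the problem min δ_{{0}}(z) subject to y + z = 0 with σ = 1 and zero proximal terms.) Then for all k ≥ 0: x̄(k) = 2(1−ρ)^k and ȳ(k) = −2(1−ρ)^k; for all k ≥ 1: y(k) = −2kρ(1−ρ)^{k−1} + (1−ρ)^k and x(k) = 2kρ(1−ρ)^{k−1} + (1−ρ)^k; and the ergodic average of the shadow iterates satisfies ȳ_a(k) := (1/(k+1)) Σ_{t=0}^k ȳ(t) = −2(1 − (1−ρ)^{k+1}) / (ρ(k+1)) for all k ≥ 0. -/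
/-!
Adding the two recursions cancels the coupling term, so `x + y` is geometric with ratio `1 - ρ`.
Each of `x` and `y` then satisfies a linear recursion forced at its own resonant ratio, which
produces the factor `k (1 - ρ) ^ (k - 1)`. The ergodic average is a geometric sum, telescoped
after multiplication by `ρ`.
-/

/-- Closed-form expressions for the pADMM iterates on the example
min δ_{{0}}(z) s.t. y + z = 0 with σ = 1 and zero proximal terms. -/
theorem stmt_18 (ρ : ℝ) (hρ0 : 0 < ρ) (hρ2 : ρ ≤ 2)
    (y x : ℕ → ℝ)
    (hy0 : y 0 = 1) (hx0 : x 0 = 1)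
    (hy : ∀ k : ℕ, y (k + 1) = (1 - ρ) * y k - ρ * (x k + y k))
    (hx : ∀ k : ℕ, x (k + 1) = (1 - ρ) * x k + ρ * (x k + y k)) :
    (∀ k : ℕ, x k + y k = 2 * (1 - ρ) ^ k ∧ -(x k + y k) = -(2 * (1 - ρ) ^ k)) ∧
    (∀ k : ℕ, 1 ≤ k →
      y k = -(2 * k * ρ * (1 - ρ) ^ (k - 1)) + (1 - ρ) ^ k ∧
      x k = 2 * k * ρ * (1 - ρ) ^ (k - 1) + (1 - ρ) ^ k) ∧
    (∀ k : ℕ, (1 / ((k : ℝ) + 1)) * ∑ t ∈ Finset.range (k + 1), (-(x t + y t))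
      = -(2 * (1 - (1 - ρ) ^ (k + 1))) / (ρ * ((k : ℝ) + 1))) := by
  have hs : ∀ k : ℕ, x k + y k = 2 * (1 - ρ) ^ k := by
    intro k
    induction k with
    | zero => rw [hx0, hy0]; norm_num
    | succ n ih =>
      rw [hx, hy, pow_succ]
      linear_combination (1 - ρ) * ih
  -- Shifting the index by one removes the truncated exponent `k - 1`.
  have hxy : ∀ n : ℕ,
      y (n + 1) = -(2 * ((n : ℝ) + 1) * ρ * (1 - ρ) ^ n) + (1 - ρ) ^ (n + 1) ∧
      x (n + 1) = 2 * ((n : ℝ) + 1) * ρ * (1 - ρ) ^ n + (1 - ρ) ^ (n + 1) := by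
    intro n
    induction n with
    | zero =>
      rw [hy, hx, hx0, hy0]
      constructor <;> norm_num <;> ring
    | succ n ih =>
      rw [hy (n + 1), hx (n + 1), hs (n + 1), ih.1, ih.2]
      push_cast
      constructor <;> ring
  have hsum : ∀ k : ℕ, ρ * ∑ t ∈ Finset.range (k + 1), (-(x t + y t))
      = -(2 * (1 - (1 - ρ) ^ (k + 1))) := by
    intro k
    simp only [hs]
    generalize k + 1 = m
    induction m with
    | zero => simp
    | succ n ih =>
      rw [Finset.sum_range_succ, mul_add, ih]
      ring
  refine ⟨fun k => ⟨hs k, by rw [hs k]⟩, ?_, ?_⟩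
  · intro k hk
    obtain ⟨n, rfl⟩ := Nat.exists_eq_add_of_le' hk
    simpa using hxy n
  · intro k
    have hk : (k : ℝ) + 1 ≠ 0 := by positivity
    rw [← hsum k]
    field_simp
end

section
/- Define real sequences y, x : ℕ → ℝ by y(0) = 1, x(0) = 1, y(k+1) = −y(k) − 2(x(k) + y(k)), x(k+1) = −x(k) + 2(x(k) + y(k)) (the Peaceman–Rachford splitting iterates, i.e. the recursion of the pADMM example with ρ = 2), and let ȳ(k) := −(x(k) + y(k)), x̄(k) := x(k) + y(k). Then: (i) |y(k)| → ∞ as k → ∞ (the point-wise iterates are unbounded); (ii) the ergodic averages of the shadow iterates converge to the optimal solution: ȳ_a(k) := (1/(k+1)) Σ_{t=0}^k ȳ(t) → 0 and x̄_a(k) := (1/(k+1)) Σ_{t=0}^k x̄(t) → 0 as k → ∞; and (iii) the ergodic average x_a(k) := (1/(k+1)) Σ_{t=0}^k x(t) does not converge: there is no L ∈ ℝ with x_a(k) → L. -/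
/-!
The sum `x k + y k` changes sign at each step, so it equals `2 * (-1) ^ k`, and solving the
recursion gives `x k = (-1) ^ k * (1 - 4 * k)` and `y k = (-1) ^ k * (1 + 4 * k)`. Hence `|y k|` is
`1 + 4 * k`, while the partial sums of `x + y` stay bounded and their averages tend to `0`.
The averages of `x` equal `2` at odd indices and are at most `1` at even indices, so they have
no limit.
-/

/-- Peaceman–Rachford (ρ = 2) example: point-wise iterates are unbounded, ergodic
averages of the shadow iterates converge to the optimum, and the ergodic average
of the point-wise dual iterates does not converge. -/
theorem stmt_19 (y x : ℕ → ℝ)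
    (hy0 : y 0 = 1) (hx0 : x 0 = 1)
    (hy : ∀ k : ℕ, y (k + 1) = -y k - 2 * (x k + y k))
    (hx : ∀ k : ℕ, x (k + 1) = -x k + 2 * (x k + y k)) :
    Filter.Tendsto (fun k : ℕ => |y k|) Filter.atTop Filter.atTop ∧
    Filter.Tendsto (fun k : ℕ => (1 / ((k : ℝ) + 1)) *
      ∑ t ∈ Finset.range (k + 1), (-(x t + y t))) Filter.atTop (nhds 0) ∧
    Filter.Tendsto (fun k : ℕ => (1 / ((k : ℝ) + 1)) *
      ∑ t ∈ Finset.range (k + 1), (x t + y t)) Filter.atTop (nhds 0) ∧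
    ¬ ∃ L : ℝ, Filter.Tendsto (fun k : ℕ => (1 / ((k : ℝ) + 1)) *
      ∑ t ∈ Finset.range (k + 1), x t) Filter.atTop (nhds L) := by
  have hxy : ∀ k : ℕ, x k = (-1) ^ k * (1 - 4 * (k : ℝ)) ∧ y k = (-1) ^ k * (1 + 4 * (k : ℝ)) := by
    intro k
    induction k with
    | zero => simp [hx0, hy0]
    | succ k ih =>
      rw [hx, hy, ih.1, ih.2]
      push_cast
      constructor <;> ring
  have hS : ∀ k : ℕ, ∑ t ∈ Finset.range (k + 1), (x t + y t) = 1 + (-1) ^ k := by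
    intro k
    induction k with
    | zero => norm_num [hx0, hy0]
    | succ k ih =>
      rw [Finset.sum_range_succ, ih, (hxy _).1, (hxy _).2]
      ring
  have hX : ∀ k : ℕ, ∑ t ∈ Finset.range (k + 1), x t
      = 3 / 2 - (-1) ^ k * (1 / 2 + 2 * (k : ℝ)) := by
    intro k
    induction k with
    | zero => norm_num [hx0]
    | succ k ih =>
      rw [Finset.sum_range_succ, ih, (hxy _).1]
      push_cast
      ring
  have hA : Filter.Tendsto (fun k : ℕ => (1 / ((k : ℝ) + 1)) *
      ∑ t ∈ Finset.range (k + 1), (x t + y t)) Filter.atTop (nhds 0) := by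
    have h2 := (tendsto_one_div_add_atTop_nhds_zero_nat (𝕜 := ℝ)).mul_const 2
    rw [zero_mul] at h2
    refine squeeze_zero (fun k => ?_) (fun k => ?_) h2
    · rw [hS]
      rcases neg_one_pow_eq_or ℝ k with h | h <;> rw [h]
      · positivity
      · simp
    · rw [hS]
      gcongr
      rcases neg_one_pow_eq_or ℝ k with h | h <;> rw [h] <;> norm_num
  refine ⟨?_, ?_, hA, ?_⟩
  · refine Filter.tendsto_atTop_mono (fun k => ?_) (tendsto_natCast_atTop_atTop (R := ℝ))
    have hk : (0 : ℝ) ≤ k := k.cast_nonneg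
    rw [(hxy k).2, abs_mul, abs_pow, abs_neg, abs_one, one_pow, one_mul]
    exact le_trans (by linarith) (le_abs_self _)
  · simpa only [Finset.sum_neg_distrib, mul_neg, neg_zero] using hA.neg
  · rintro ⟨L, hL⟩
    have hodd := hL.comp (Filter.tendsto_atTop_mono (fun m : ℕ => (by omega : m ≤ 2 * m + 1))
      Filter.tendsto_id)
    have heven := hL.comp (Filter.tendsto_atTop_mono (fun m : ℕ => (by omega : m ≤ 2 * m))
      Filter.tendsto_id)
    have h1 : L ≤ 1 := by
      refine le_of_tendsto' heven fun m => ?_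
      have hm : (0 : ℝ) ≤ m := m.cast_nonneg
      simp only [Function.comp_apply]
      rw [hX, one_div_mul_eq_div, div_le_one (by positivity), pow_mul]
      push_cast
      norm_num
      linarith
    have h2 : 2 ≤ L := by
      refine ge_of_tendsto' hodd fun m => ?_
      have hm : (0 : ℝ) ≤ m := m.cast_nonneg
      simp only [Function.comp_apply]
      rw [hX, one_div_mul_eq_div, le_div_iff₀ (by positivity), pow_succ, pow_mul]
      push_cast
      norm_num
      linarith
    linarith
end
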